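/- The set of codes of finite term rewriting systems R (over finite signatures) such that R is weakly confluent on every term is Σ⁰₁-complete. -/

import Mathlib

/-!
The set of codes of weakly confluent finite term rewriting systems is `Σ⁰₁`-complete.

**Membership.** By the critical pair lemma (`wcr_iff`), a system is weakly confluent on all terms over
its signature iff all its critical pairs are joinable. There are finitely many overlaps of left-hand
sides; whether an overlap unifies is decided by a unification procedure (`ustep`) that eliminates one
equation or one variable at a time, carrying the two reducts of the peak along, so that it ends either
with no solution or with the critical pair itself. Joinability of a pair is witnessed by two finite
rewrite sequences. Hence weak confluence is equivalent to the existence of a certificate (`FullOK`)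
whose correctness is primitive recursive, and an unbounded search for it has the required domain
(`sigma01_wcrSet`).

**Hardness.** A recursively enumerable set is the set of `n` for which some code `c` of
`Turing.ToPartrec` halts on `[n]`. Small-step evaluation of `c` is simulated by a fixed system
(`Sim.machine`) whose left-hand sides overlap only trivially, so that a term representing a
configuration has at most one reduct (`Sim.next_eq_of_rewrite`), and the initial term reduces to the normal
form `H` iff the computation halts (`Sim.reduces_start_iff`). Adding the two rules `A → init(c, n)` and
`A → H` creates, up to symmetry, one nontrivial critical pair, `(init(c, n), H)`; since `H` is normal it is joinable
iff `init(c, n)` reduces to `H`. So the extended system is weakly confluent iff `c` halts on `[n]`, and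
its code is computable from `n`.
-/

/-- First-order terms over the fixed countably infinite set of variables
(named by naturals): a term is a variable or a function symbol (named by a
natural number) applied to a list of argument terms. -/
inductive Term : Type
  | var : ℕ → Term
  | app : ℕ → List Term → Term

namespace Term

/-- Homomorphic application of a substitution (a map from variables to terms). -/
def subst (σ : ℕ → Term) : Term → Term
  | var n => σ n
  | app f ts => app f (ts.attach.map (fun x => subst σ x.1))
decreasing_by
  have := List.sizeOf_lt_of_mem x.2
  simp only [Term.app.sizeOf_spec]; omega

/-- An injective encoding of terms into the natural numbers. -/
def encode : Term → ℕ
  | var n => Nat.pair 0 n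
  | app f ts => Nat.pair (f + 1) (Encodable.encode (ts.attach.map (fun x => encode x.1)))
decreasing_by
  have := List.sizeOf_lt_of_mem x.2
  simp only [Term.app.sizeOf_spec]; omega

end Term

/-- `IsVarOf n t` holds iff the variable `n` occurs in the term `t`. -/
inductive IsVarOf (n : ℕ) : Term → Prop
  | var : IsVarOf n (.var n)
  | app {f : ℕ} {ts : List Term} {t : Term} : t ∈ ts → IsVarOf n t → IsVarOf n (.app f ts)

/-- A term is ground if no variable occurs in it. -/
def Ground (t : Term) : Prop := ∀ n : ℕ, ¬ IsVarOf n t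

/-- A (finite) signature is presented by a finite list of pairs
(function symbol, arity); `WFSig` states that each symbol has a unique arity. -/
def WFSig (sig : List (ℕ × ℕ)) : Prop :=
  ∀ p ∈ sig, ∀ q ∈ sig, p.1 = q.1 → p.2 = q.2

/-- `WFTerm sig t`: `t` is a term over the signature `sig`, i.e. every function
symbol occurring in `t` belongs to `sig` and is applied to the correct number
of arguments. -/
inductive WFTerm (sig : List (ℕ × ℕ)) : Term → Prop
  | var (n : ℕ) : WFTerm sig (.var n)
  | app {f : ℕ} {ts : List Term} : (f, ts.length) ∈ sig →
      (∀ t ∈ ts, WFTerm sig t) → WFTerm sig (.app f ts)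

/-- `WFTRS sig R`: the finite list of rules `R` is a term rewriting system over
the signature `sig`: `sig` assigns unique arities, both sides of every rule are
terms over `sig`, no left-hand side is a variable, and every variable occurring
in a right-hand side occurs in the corresponding left-hand side. -/
def WFTRS (sig : List (ℕ × ℕ)) (R : List (Term × Term)) : Prop :=
  WFSig sig ∧ ∀ p ∈ R, WFTerm sig p.1 ∧ WFTerm sig p.2 ∧
    (∀ n : ℕ, p.1 ≠ .var n) ∧ (∀ n : ℕ, IsVarOf n p.2 → IsVarOf n p.1)

/-- The one-step rewrite relation `→_R` of a TRS `R`: application of a rule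
under a substitution, closed under arbitrary one-hole contexts (i.e. embedded
at any argument position at any depth). -/
inductive Rewrite (R : List (Term × Term)) : Term → Term → Prop
  | rule (l r : Term) (σ : ℕ → Term) (h : (l, r) ∈ R) :
      Rewrite R (l.subst σ) (r.subst σ)
  | congr (f : ℕ) (ts₁ ts₂ : List Term) (t t' : Term) (h : Rewrite R t t') :
      Rewrite R (.app f (ts₁ ++ t :: ts₂)) (.app f (ts₁ ++ t' :: ts₂))

/-- Many-step rewriting `→*_R` (reflexive-transitive closure of `→_R`). -/
def Reduces (R : List (Term × Term)) : Term → Term → Prop :=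
  Relation.ReflTransGen (Rewrite R)

/-- `t` is a normal form of `R` (admits no `→_R`-step). -/
def NormalForm (R : List (Term × Term)) (t : Term) : Prop := ∀ u : Term, ¬ Rewrite R t u

/-- `R` is strongly normalizing (terminating) on `t`:
no infinite rewrite sequence starts at `t`. -/
def SNon (R : List (Term × Term)) (t : Term) : Prop :=
  ¬ ∃ f : ℕ → Term, f 0 = t ∧ ∀ n : ℕ, Rewrite R (f n) (f (n + 1))

/-- `R` is weakly normalizing on `t`: some reduction from `t` ends in a normal form. -/
def WNon (R : List (Term × Term)) (t : Term) : Prop :=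
  ∃ s : Term, Reduces R t s ∧ NormalForm R s

/-- `R` is confluent (Church-Rosser) on `t`. -/
def CRon (R : List (Term × Term)) (t : Term) : Prop :=
  ∀ t₁ t₂ : Term, Reduces R t t₁ → Reduces R t t₂ →
    ∃ d : Term, Reduces R t₁ d ∧ Reduces R t₂ d

/-- `R` is weakly confluent (weakly Church-Rosser) on `t`. -/
def WCRon (R : List (Term × Term)) (t : Term) : Prop :=
  ∀ t₁ t₂ : Term, Rewrite R t t₁ → Rewrite R t t₂ →
    ∃ d : Term, Reduces R t₁ d ∧ Reduces R t₂ d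

/-- A root step `s →_{R,ε} t`: `s = ℓσ` and `t = rσ` for some rule `ℓ → r` of `R`. -/
def RootStep (R : List (Term × Term)) (s t : Term) : Prop :=
  ∃ (l r : Term) (σ : ℕ → Term), (l, r) ∈ R ∧ s = l.subst σ ∧ t = r.subst σ

/-- Code of a rewrite rule. -/
def encodeRule (p : Term × Term) : ℕ := Nat.pair p.1.encode p.2.encode

/-- Code of a finite TRS. -/
def encodeTRS (R : List (Term × Term)) : ℕ := Encodable.encode (R.map encodeRule)

/-- Code of a finite signature. -/
def encodeSig (sig : List (ℕ × ℕ)) : ℕ := Encodable.encode sig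

/-- A set `A ⊆ ℕ` is Σ⁰₁ (recursively enumerable) if it is the domain of a
partial computable function. -/
def Sigma01 (A : Set ℕ) : Prop :=
  ∃ f : ℕ →. ℕ, Nat.Partrec f ∧ ∀ n : ℕ, n ∈ A ↔ (f n).Dom

/-- `B` is many-one reducible to `A`: there is a total computable `g` with
`n ∈ B ↔ g n ∈ A` for all `n`. -/
def ManyOneRed (B A : Set ℕ) : Prop :=
  ∃ g : ℕ → ℕ, Computable g ∧ ∀ n : ℕ, n ∈ B ↔ g n ∈ A

/-- `A` is Σ⁰₁-complete. -/
def Sigma01Complete (A : Set ℕ) : Prop :=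
  Sigma01 A ∧ ∀ B : Set ℕ, Sigma01 B → ManyOneRed B A

/-- A set `A ⊆ ℕ` is Π⁰₂ if there is a decidable (computable) predicate
`P ⊆ ℕ³` with `n ∈ A ↔ ∀ x ∃ y, P n x y`. -/
def Pi02 (A : Set ℕ) : Prop :=
  ∃ p : ℕ → ℕ → ℕ → Bool,
    Computable (fun x : ℕ × ℕ × ℕ => p x.1 x.2.1 x.2.2) ∧
    ∀ n : ℕ, n ∈ A ↔ ∀ x : ℕ, ∃ y : ℕ, p n x y = true

/-- `A` is Π⁰₂-complete. -/
def Pi02Complete (A : Set ℕ) : Prop :=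
  Pi02 A ∧ ∀ B : Set ℕ, Pi02 B → ManyOneRed B A

/-- A set `A ⊆ ℕ` is Π¹₁ if there is a decidable (computable) predicate
`P ⊆ ℕ²` such that `n ∈ A` iff for every function `α : ℕ → ℕ` there exists
`k` with `P n ⟨α 0, …, α (k-1)⟩`, where `⟨·⟩` is the (computable) coding of
finite sequences of naturals. -/
def Pi11 (A : Set ℕ) : Prop :=
  ∃ p : ℕ → ℕ → Bool,
    Computable (fun x : ℕ × ℕ => p x.1 x.2) ∧
    ∀ n : ℕ, n ∈ A ↔ ∀ α : ℕ → ℕ, ∃ k : ℕ,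
      p n (Encodable.encode (List.ofFn (fun i : Fin k => α i))) = true

/-- `A` is Π¹₁-complete. -/
def Pi11Complete (A : Set ℕ) : Prop :=
  Pi11 A ∧ ∀ B : Set ℕ, Pi11 B → ManyOneRed B A

/-! ### Terms: induction, folds and the coding by natural numbers -/

namespace Term

/-- Structural induction on terms, with the hypothesis for all arguments at once. -/
theorem ind {p : Term → Prop} (hv : ∀ n, p (var n))
    (ha : ∀ f ts, (∀ t ∈ ts, p t) → p (app f ts)) : ∀ t, p t
  | var n => hv n
  | app f ts => ha f ts (fun t _ => ind hv ha t)
decreasing_by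
  have := List.sizeOf_lt_of_mem ‹t ∈ ts›
  simp only [Term.app.sizeOf_spec]; omega

@[simp] theorem subst_var (σ : ℕ → Term) (n : ℕ) : (var n).subst σ = σ n := by
  simp [subst]

@[simp] theorem subst_app (σ : ℕ → Term) (f : ℕ) (ts : List Term) :
    (app f ts).subst σ = app f (ts.map (subst σ)) := by
  simp [subst]

theorem encode_var (n : ℕ) : (var n).encode = Nat.pair 0 n := by
  simp [encode]

theorem encode_app (f : ℕ) (ts : List Term) :
    (app f ts).encode = Nat.pair (f + 1) (Encodable.encode (ts.map encode)) := by
  simp [encode]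

/-- The value of a term in the algebra with variables interpreted by `vf` and function
symbols by `af`. -/
def fold {σ : Type} (vf : ℕ → σ) (af : ℕ → List σ → σ) : Term → σ
  | var n => vf n
  | app f ts => af f (ts.attach.map (fun x => fold vf af x.1))
decreasing_by
  have := List.sizeOf_lt_of_mem x.2
  simp only [Term.app.sizeOf_spec]; omega

@[simp] theorem fold_var {σ : Type} (vf : ℕ → σ) (af : ℕ → List σ → σ) (n : ℕ) :
    (var n).fold vf af = vf n := by
  simp [fold]

@[simp] theorem fold_app {σ : Type} (vf : ℕ → σ) (af : ℕ → List σ → σ) (f : ℕ)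
    (ts : List Term) : (app f ts).fold vf af = af f (ts.map (fold vf af)) := by
  simp [fold]

theorem lt_encode_list {x : ℕ} : ∀ {l : List ℕ}, x ∈ l → x < Encodable.encode l
  | [], h => by simp at h
  | a :: l, h => by
    rw [Encodable.encode_list_cons]
    simp only [Encodable.encode_nat]
    rcases List.mem_cons.1 h with rfl | h
    · exact Nat.lt_succ_of_le (Nat.left_le_pair _ _)
    · exact (lt_encode_list h).trans_le
        ((Nat.right_le_pair _ _).trans (Nat.le_succ _))

theorem encode_lt_of_mem {t : Term} {f : ℕ} {ts : List Term} (h : t ∈ ts) :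
    t.encode < (app f ts).encode := by
  rw [encode_app]
  exact (lt_encode_list (List.mem_map_of_mem h)).trans_le (Nat.right_le_pair _ _)

theorem encode_injective : Function.Injective encode := by
  intro s
  induction s using ind with
  | hv n =>
    rintro (m | ⟨g, us⟩) h
    · simpa [encode_var, Nat.pair_eq_pair] using h
    · simp [encode_var, encode_app, Nat.pair_eq_pair] at h
  | ha f ts ih =>
    rintro (m | ⟨g, us⟩) h
    · simp [encode_var, encode_app, Nat.pair_eq_pair] at h
    · simp only [encode_app, Nat.pair_eq_pair, add_left_inj, Encodable.encode_inj] at h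
      obtain ⟨rfl, h⟩ := h
      congr 1
      clear * - ih h
      induction ts generalizing us with
      | nil => cases us <;> simp_all
      | cons t ts iht =>
        cases us with
        | nil => simp at h
        | cons u us =>
          simp only [List.map_cons, List.cons.injEq] at h
          rw [ih t (by simp) h.1, iht (fun t ht => ih t (by simp [ht])) us h.2]

theorem encode_surjective : Function.Surjective encode := by
  intro n
  induction n using Nat.strong_induction_on with
  | _ n ih =>
    rcases h : n.unpair.1 with _ | f
    · exact ⟨var n.unpair.2, by rw [encode_var, ← h, Nat.pair_unpair]⟩
    · set l := Denumerable.ofNat (List ℕ) n.unpair.2 with hl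
      have hl' : Encodable.encode l = n.unpair.2 := by simp [hl]
      have : ∀ x ∈ l, ∃ t, encode t = x := fun x hx =>
        ih x ((lt_encode_list hx).trans_le (hl' ▸ Nat.unpair_right_le n))
      obtain ⟨ts, hts⟩ : ∃ ts : List Term, ts.map encode = l := by
        clear_value l
        clear hl hl'
        induction l with
        | nil => exact ⟨[], rfl⟩
        | cons a l ihl =>
          obtain ⟨ts, rfl⟩ := ihl (fun x hx => this x (by simp [hx]))
          obtain ⟨t, rfl⟩ := this a (by simp)
          exact ⟨t :: ts, rfl⟩
      exact ⟨app f ts, by rw [encode_app, hts, hl', ← h, Nat.pair_unpair]⟩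

/-- The coding of terms is a bijection with the natural numbers. -/
noncomputable def equivNat : Term ≃ ℕ :=
  Equiv.ofBijective encode ⟨encode_injective, encode_surjective⟩

noncomputable instance : Primcodable Term := Primcodable.ofEquiv ℕ equivNat

theorem encodable_encode (t : Term) : Encodable.encode t = t.encode := rfl

instance : DecidableEq Term := fun _ _ => decidable_of_iff _ encode_injective.eq_iff

end Term

open Term

theorem primrec_encode : Primrec Term.encode := Primrec.encode

theorem primrec_var : Primrec Term.var := by
  refine Primrec.encode_iff.1 ?_
  refine (Primrec₂.natPair.comp (Primrec.const 0) Primrec.id).of_eq fun n => ?_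
  rw [encodable_encode, encode_var]; rfl

theorem primrec_app : Primrec₂ Term.app := by
  refine Primrec.encode_iff.1 ?_
  refine (Primrec₂.natPair.comp (Primrec.succ.comp Primrec.fst)
    (Primrec.encode.comp (Primrec.list_map Primrec.snd
      (primrec_encode.comp Primrec.snd).to₂))).of_eq fun p => ?_
  rw [encodable_encode, encode_app]

/-- Functions defined by structural recursion on terms are primitive recursive. -/
theorem primrec_fold {α σ : Type} [Primcodable α] [Primcodable σ] {vf : α → ℕ → σ}
    {af : α → ℕ → List σ → σ} {t : α → Term} (hv : Primrec₂ vf)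
    (ha : Primrec₂ fun (a : α) (p : ℕ × List σ) => af a p.1 p.2) (ht : Primrec t) :
    Primrec fun a => (t a).fold (vf a) (af a) := by
  have key : Primrec₂ fun (a : α) (n : ℕ) => (equivNat.symm n).fold (vf a) (af a) := by
    refine Primrec.nat_strong_rec _
      (g := fun a IH => if IH.length.unpair.1 = 0 then some (vf a IH.length.unpair.2) else
        some (af a (IH.length.unpair.1 - 1)
          ((Denumerable.ofNat (List ℕ) IH.length.unpair.2).filterMap fun i => IH[i]?))) ?_ ?_
    · have hl : Primrec fun p : α × List σ => p.2.length.unpair :=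
        Primrec.unpair.comp (Primrec.list_length.comp Primrec.snd)
      refine Primrec.ite (Primrec.eq.comp (Primrec.fst.comp hl) (Primrec.const 0)) ?_ ?_
      · exact Primrec.option_some.comp (hv.comp Primrec.fst (Primrec.snd.comp hl))
      · refine Primrec.option_some.comp (ha.comp Primrec.fst (Primrec.pair ?_ ?_))
        · exact Primrec.nat_sub.comp (Primrec.fst.comp hl) (Primrec.const 1)
        · exact Primrec.listFilterMap ((Primrec.ofNat _).comp (Primrec.snd.comp hl))
            (Primrec.list_getElem?.comp (Primrec.snd.comp Primrec.fst) Primrec.snd).to₂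
    · intro a n
      obtain ⟨t, rfl⟩ := equivNat.surjective n
      have he : ∀ t, equivNat t = t.encode := fun _ => rfl
      rcases t with n | ⟨f, ts⟩
      · simp [he, encode_var]
        rw [← encode_var, ← he]; simp
      · simp only [Equiv.symm_apply_apply]
        have : ∀ u ∈ ts, ((List.range (equivNat (app f ts))).map fun n =>
            (equivNat.symm n).fold (vf a) (af a))[u.encode]? = some (u.fold (vf a) (af a)) := by
          intro u hu
          have h1 := encode_lt_of_mem (f := f) hu
          rw [← he, ← he] at h1
          rw [← he]
          simp [h1]
        have h2 : (equivNat (app f ts)).unpair = (f + 1, Encodable.encode (ts.map Term.encode)) := by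
          rw [he, encode_app, Nat.unpair_pair]
        simp only [List.length_map, List.length_range, h2]
        simp only [Nat.add_one_ne_zero, if_false, Denumerable.ofNat_encode, List.filterMap_map,
          Nat.add_sub_cancel, fold_app]
        congr 2
        exact (List.filterMap_congr this).trans (congrFun List.filterMap_eq_map ts)
  refine (key.comp Primrec.id (primrec_encode.comp ht)).of_eq fun a => ?_
  show (equivNat.symm (equivNat (t a))).fold _ _ = _
  simp

/-! ### Substitutions, variables and sizes -/

namespace Term

theorem subst_eq_fold (σ : ℕ → Term) (t : Term) : t.subst σ = t.fold σ app := by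
  induction t using ind with
  | hv n => simp
  | ha f ts ih => simpa using ih

theorem subst_subst (σ τ : ℕ → Term) (t : Term) :
    (t.subst σ).subst τ = t.subst fun n => (σ n).subst τ := by
  induction t using ind with
  | hv n => simp
  | ha f ts ih => simpa using ih

theorem subst_id (t : Term) : t.subst var = t := by
  induction t using ind with
  | hv n => simp
  | ha f ts ih => simpa using (List.map_congr_left ih).trans (List.map_id _)

/-- The list of variable occurrences of a term. -/
def vars (t : Term) : List ℕ := t.fold (fun n => [n]) fun _ ls => ls.flatten

@[simp] theorem vars_var (n : ℕ) : (var n).vars = [n] := by simp [vars]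

theorem mem_vars_app {n f : ℕ} {ts : List Term} :
    n ∈ (app f ts).vars ↔ ∃ t ∈ ts, n ∈ t.vars := by
  simp [vars]

theorem mem_vars {n : ℕ} {t : Term} : n ∈ t.vars ↔ IsVarOf n t := by
  induction t using ind with
  | hv m =>
    simp only [vars_var, List.mem_singleton]
    constructor
    · rintro rfl; exact .var
    · rintro ⟨⟩; rfl
  | ha f ts ih =>
    rw [mem_vars_app]
    constructor
    · rintro ⟨t, ht, h⟩; exact .app ht ((ih t ht).1 h)
    · rintro (_ | ⟨ht, h⟩); exact ⟨_, ht, (ih _ ht).2 h⟩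

theorem subst_congr {σ τ : ℕ → Term} {t : Term} (h : ∀ n ∈ t.vars, σ n = τ n) :
    t.subst σ = t.subst τ := by
  induction t using ind with
  | hv n => simpa using h
  | ha f ts ih =>
    simp only [subst_app, app.injEq, true_and]
    exact List.map_congr_left fun t ht => ih t ht fun n hn => h n (mem_vars_app.2 ⟨t, ht, hn⟩)

theorem eq_of_subst_eq {σ τ : ℕ → Term} {t : Term} (h : t.subst σ = t.subst τ) :
    ∀ n ∈ t.vars, σ n = τ n := by
  induction t using ind with
  | hv n => simpa using h
  | ha f ts ih =>
    simp only [subst_app, app.injEq, true_and] at h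
    intro n hn
    obtain ⟨t, ht, hn⟩ := mem_vars_app.1 hn
    exact ih t ht (List.map_inj_left.1 h t ht) n hn

theorem mem_vars_subst {σ : ℕ → Term} {t : Term} {n : ℕ} :
    n ∈ (t.subst σ).vars ↔ ∃ m ∈ t.vars, n ∈ (σ m).vars := by
  induction t using ind with
  | hv m => simp
  | ha f ts ih =>
    simp only [subst_app, mem_vars_app, List.mem_map, exists_exists_and_eq_and]
    constructor
    · rintro ⟨t, ht, h⟩
      obtain ⟨m, hm, h⟩ := (ih t ht).1 h
      exact ⟨m, ⟨t, ht, hm⟩, h⟩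
    · rintro ⟨m, ⟨t, ht, hm⟩, h⟩
      exact ⟨t, ht, (ih t ht).2 ⟨m, hm, h⟩⟩

/-- The number of symbol and variable occurrences of a term. -/
def size (t : Term) : ℕ := t.fold (fun _ => 1) fun _ ls => 1 + ls.sum

@[simp] theorem size_var (n : ℕ) : (var n).size = 1 := by simp [size]

@[simp] theorem size_app (f : ℕ) (ts : List Term) :
    (app f ts).size = 1 + (ts.map size).sum := by
  simp [size]; rfl

theorem size_pos (t : Term) : 0 < t.size := by
  cases t <;> simp

theorem size_lt_of_mem {f : ℕ} {ts : List Term} {t : Term} (h : t ∈ ts) :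
    t.size < (app f ts).size := by
  have : t.size ≤ (ts.map size).sum := List.le_sum_of_mem (List.mem_map_of_mem h)
  rw [size_app]; omega

theorem size_le_of_mem_vars {σ : ℕ → Term} {t : Term} {n : ℕ} (h : n ∈ t.vars) :
    (σ n).size ≤ (t.subst σ).size := by
  induction t using ind with
  | hv m => obtain rfl : n = m := by simpa using h
            simp
  | ha f ts ih =>
    obtain ⟨t, ht, hn⟩ := mem_vars_app.1 h
    refine (ih t ht hn).trans ?_
    rw [subst_app]
    exact (size_lt_of_mem (List.mem_map_of_mem ht)).le

end Term

theorem WFTerm.subst {sig : List (ℕ × ℕ)} {t : Term} (ht : WFTerm sig t) {σ : ℕ → Term}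
    (hσ : ∀ n, WFTerm sig (σ n)) : WFTerm sig (t.subst σ) := by
  induction ht with
  | var n => simpa using hσ n
  | app h _ ih =>
    rw [subst_app]
    refine .app (by simpa using h) ?_
    simpa using ih

theorem wfTerm_app {sig : List (ℕ × ℕ)} {f : ℕ} {ts : List Term} :
    WFTerm sig (.app f ts) ↔ (f, ts.length) ∈ sig ∧ ∀ t ∈ ts, WFTerm sig t :=
  ⟨fun h => by cases h with | app h1 h2 => exact ⟨h1, h2⟩, fun h => .app h.1 h.2⟩

/-! ### Overlaps and the critical pair lemma -/

section rewriting

variable {R : List (Term × Term)}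

theorem Rewrite.of_mem {p : Term × Term} (h : p ∈ R) (σ : ℕ → Term) :
    Rewrite R (p.1.subst σ) (p.2.subst σ) :=
  .rule p.1 p.2 σ h

theorem rewrite_app {f : ℕ} {ts : List Term} {t' : Term} (h : Rewrite R (.app f ts) t') :
    RootStep R (.app f ts) t' ∨ ∃ as t bs u, ts = as ++ t :: bs ∧ t' = .app f (as ++ u :: bs) ∧
      Rewrite R t u := by
  generalize hs : Term.app f ts = s at h
  cases h with
  | rule l r σ h => exact .inl ⟨l, r, σ, h, rfl, rfl⟩
  | congr g ts₁ ts₂ t t' h =>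
    cases hs
    exact .inr ⟨ts₁, t, ts₂, t', rfl, rfl, h⟩

theorem Rewrite.subst {s t : Term} (h : Rewrite R s t) (θ : ℕ → Term) :
    Rewrite R (s.subst θ) (t.subst θ) := by
  induction h with
  | rule l r σ h => rw [subst_subst, subst_subst]; exact .rule l r _ h
  | congr f ts₁ ts₂ t t' _ ih =>
    simp only [subst_app, List.map_append, List.map_cons]
    exact .congr _ _ _ _ _ ih

theorem Reduces.subst {s t : Term} (h : Reduces R s t) (θ : ℕ → Term) :
    Reduces R (s.subst θ) (t.subst θ) := by
  induction h with
  | refl => exact .refl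
  | tail _ h ih => exact ih.tail (h.subst θ)

theorem Reduces.congr {s t : Term} (h : Reduces R s t) (f : ℕ) (as bs : List Term) :
    Reduces R (.app f (as ++ s :: bs)) (.app f (as ++ t :: bs)) := by
  induction h with
  | refl => exact .refl
  | tail _ h ih => exact ih.tail (.congr f as bs _ _ h)

theorem reduces_args {f : ℕ} {ts us : List Term} (h : List.Forall₂ (Reduces R) ts us) :
    ∀ as, Reduces R (.app f (as ++ ts)) (.app f (as ++ us)) := by
  induction h with
  | nil => exact fun as => .refl
  | @cons t u ts us h _ ih =>
    intro as
    refine Relation.ReflTransGen.trans (h.congr f as ts) ?_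
    change Reduces R _ _
    simpa using ih (as ++ [u])

theorem reduces_subst {σ τ : ℕ → Term} (h : ∀ n, Reduces R (σ n) (τ n)) (t : Term) :
    Reduces R (t.subst σ) (t.subst τ) := by
  induction t using ind with
  | hv n => simpa using h n
  | ha f ts ih =>
    rw [subst_app, subst_app]
    refine reduces_args ?_ []
    rw [List.forall₂_map_left_iff, List.forall₂_map_right_iff, List.forall₂_same]
    exact ih

/-- `Joinable R s t`: the terms `s` and `t` have a common reduct. -/
def Joinable (R : List (Term × Term)) (s t : Term) : Prop :=
  ∃ d, Reduces R s d ∧ Reduces R t d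

theorem Joinable.symm {s t : Term} (h : Joinable R s t) : Joinable R t s :=
  let ⟨d, h1, h2⟩ := h
  ⟨d, h2, h1⟩

theorem Joinable.refl (t : Term) : Joinable R t t := ⟨t, .refl, .refl⟩

theorem Joinable.subst {s t : Term} (h : Joinable R s t) (θ : ℕ → Term) :
    Joinable R (s.subst θ) (t.subst θ) :=
  let ⟨d, h1, h2⟩ := h
  ⟨d.subst θ, h1.subst θ, h2.subst θ⟩

theorem Joinable.congr {s t : Term} (h : Joinable R s t) (f : ℕ) (as bs : List Term) :
    Joinable R (.app f (as ++ s :: bs)) (.app f (as ++ t :: bs)) :=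
  let ⟨_, h1, h2⟩ := h
  ⟨_, h1.congr f as bs, h2.congr f as bs⟩

/-- `Overlap r l u s`: some occurrence of the non-variable term `u` in `l`, when replaced by `r`,
turns `l` into `s`. -/
inductive Overlap (r : Term) : Term → Term → Term → Prop
  | root (f : ℕ) (ts : List Term) : Overlap r (.app f ts) (.app f ts) r
  | arg (f : ℕ) (as bs : List Term) {t u s : Term} (h : Overlap r t u s) :
      Overlap r (.app f (as ++ t :: bs)) u (.app f (as ++ s :: bs))

theorem Overlap.rewrite {r l u s : Term} (h : Overlap r l u s) {θ : ℕ → Term}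
    (hr : Rewrite R (u.subst θ) (r.subst θ)) : Rewrite R (l.subst θ) (s.subst θ) := by
  induction h with
  | root f ts => exact hr
  | arg f as bs _ ih =>
    simp only [subst_app, List.map_append, List.map_cons]
    exact .congr _ _ _ _ _ (ih hr)

/-- A rewrite step out of an instance `lθ` either contracts a redex at a non-variable position of
`l`, or happens inside the substitution; in the latter case it can be completed to an instance
of `l` under a reduct of `θ`. The first case is stated for all `θ'` that agree with `θ` on `l`, so
that the substitution of the second rule can be merged into `θ'`. -/
theorem rewrite_subst (l : Term) (θ : ℕ → Term) (t' : Term) (h : Rewrite R (l.subst θ) t') :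
    (∃ p ∈ R, ∃ τ, ∀ θ' r', l.subst θ' = l.subst θ → r'.subst θ' = p.2.subst τ →
      ∃ u s, Overlap r' l u s ∧ u.subst θ' = p.1.subst τ ∧ s.subst θ' = t') ∨
    ∃ σ, (∀ n, Reduces R (θ n) (σ n)) ∧ Reduces R t' (l.subst σ) := by
  induction l using ind generalizing t' with
  | hv n =>
    right
    rw [subst_var] at h
    refine ⟨Function.update θ n t', fun m => ?_, ?_⟩
    · rcases eq_or_ne m n with rfl | hm
      · simpa [Reduces] using Relation.ReflTransGen.single h
      · simpa [Reduces, hm] using Relation.ReflTransGen.refl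
    · simpa [Reduces] using Relation.ReflTransGen.refl
  | ha f ts ih =>
    rw [subst_app] at h
    rcases rewrite_app h with ⟨l₂, r₂, τ, hp, h1, rfl⟩ | ⟨as, w, bs, w', h1, rfl, hw⟩
    · refine .inl ⟨(l₂, r₂), hp, τ, fun θ' r' hθ' hr' => ⟨_, _, .root f ts, ?_, hr'⟩⟩
      rw [hθ', subst_app, h1]
    · obtain ⟨as, xs, rfl, rfl, h2⟩ := List.map_eq_append_iff.1 h1
      obtain ⟨t, bs, rfl, rfl, rfl⟩ := List.map_eq_cons_iff.1 h2
      rcases ih t (by simp) w' hw with ⟨p, hp, τ, H⟩ | ⟨σ, hσ, hw'⟩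
      · refine .inl ⟨p, hp, τ, fun θ' r' hθ' hr' => ?_⟩
        have hθ := fun n hn => eq_of_subst_eq hθ' n hn
        have hag : ∀ x ∈ as ++ t :: bs, x.subst θ' = x.subst θ := fun x hx =>
          subst_congr fun n hn => hθ n (mem_vars_app.2 ⟨x, hx, hn⟩)
        obtain ⟨u, s, hO, hu, hs⟩ := H θ' r' (hag t (by simp)) hr'
        refine ⟨u, _, hO.arg f as bs, hu, ?_⟩
        simp only [subst_app, List.map_append, List.map_cons, hs]
        rw [List.map_congr_left fun x hx => hag x (by simp [hx]),
          List.map_congr_left (l := bs) fun x hx => hag x (by simp [hx])]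
      · refine .inr ⟨σ, hσ, (hw'.congr _ _ _).trans ?_⟩
        simp only [subst_app, List.map_append, List.map_cons]
        have h3 : ∀ l : List Term, List.Forall₂ (Reduces R) (l.map (Term.subst θ))
            (l.map (Term.subst σ)) := fun l => by
          rw [List.forall₂_map_left_iff, List.forall₂_map_right_iff, List.forall₂_same]
          exact fun x _ => reduces_subst hσ x
        exact reduces_args (List.rel_append (h3 as) (.cons .refl (h3 bs))) []

/-- Renaming of the first rule of an overlap: even variables. -/
def ren0 (n : ℕ) : Term := .var (2 * n)

/-- Renaming of the second rule of an overlap: odd variables. -/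
def ren1 (n : ℕ) : Term := .var (2 * n + 1)

/-- All instances of all critical overlaps of `R` are joinable. -/
def CPJoinable (R : List (Term × Term)) : Prop :=
  ∀ p ∈ R, ∀ q ∈ R, ∀ u s, Overlap (q.2.subst ren1) (p.1.subst ren0) u s →
    ∀ θ, u.subst θ = (q.1.subst ren1).subst θ →
      Joinable R ((p.2.subst ren0).subst θ) (s.subst θ)

theorem CPJoinable.root (hR : CPJoinable R) {p : Term × Term} (hp : p ∈ R) (σ : ℕ → Term)
    {t' : Term} (h : Rewrite R (p.1.subst σ) t') : Joinable R (p.2.subst σ) t' := by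
  -- `merge τ` is `σ` on even and `τ` on odd variables
  let merge : (ℕ → Term) → ℕ → Term := fun τ n => if n % 2 = 0 then σ (n / 2) else τ (n / 2)
  have h0 : ∀ τ t, (Term.subst ren0 t).subst (merge τ) = t.subst σ := fun τ t => by
    rw [subst_subst]; exact subst_congr fun n _ => by simp [ren0, merge]
  have h1 : ∀ τ t, (Term.subst ren1 t).subst (merge τ) = t.subst τ := fun τ t => by
    rw [subst_subst]; exact subst_congr fun n _ => by
      have e1 : (2 * n + 1) % 2 = 1 := by omega
      have e2 : (2 * n + 1) / 2 = n := by omega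
      simp [ren1, merge, e1, e2]
  rw [← h0 Term.var] at h
  rcases rewrite_subst _ _ _ h with ⟨q, hq, τ, H⟩ | ⟨ρ, hρ, ht⟩
  · obtain ⟨u, s, hO, hu, rfl⟩ := H (merge τ) (q.2.subst ren1) (by rw [h0, h0]) (h1 τ _)
    rw [← h0 τ]
    exact hR p hp q hq u s hO _ (by rw [hu, h1])
  · refine ⟨(p.2.subst ren0).subst ρ, ?_, ht.tail ?_⟩
    · rw [← h0 Term.var]; exact reduces_subst hρ _
    · rw [subst_subst, subst_subst]; exact .of_mem hp _

/-- The critical pair lemma. -/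
theorem CPJoinable.wcr (hR : CPJoinable R) (t : Term) : WCRon R t := by
  have hroot : ∀ {s t₁ t₂}, RootStep R s t₁ → Rewrite R s t₂ → Joinable R t₁ t₂ := by
    rintro s t₁ t₂ ⟨l, r, σ, hp, rfl, rfl⟩ h
    exact hR.root (p := (l, r)) hp σ h
  induction t using ind with
  | hv n =>
    intro t₁ t₂ h1 h2
    refine hroot ?_ h2
    generalize hs : Term.var n = s at h1
    cases h1 with
    | rule l r σ h => exact ⟨l, r, σ, h, rfl, rfl⟩
    | congr => cases hs
  | ha f ts ih =>
    intro t₁ t₂ h1 h2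
    rcases rewrite_app h1 with h | ⟨as, x, bs, x', rfl, rfl, hx⟩
    · exact hroot h h2
    rcases rewrite_app h2 with h | ⟨cs, y, ds, y', he, rfl, hy⟩
    · exact (hroot h h1).symm
    rcases List.append_eq_append_iff.1 he with ⟨es, rfl, h3⟩ | ⟨es, rfl, h3⟩
    · rcases es with _ | ⟨z, es⟩
      · obtain ⟨rfl, rfl⟩ : x = y ∧ bs = ds := by simpa using h3
        have := Joinable.congr (ih x (by simp) x' y' hx hy) f as bs
        simpa [Joinable] using this
      · obtain ⟨rfl, rfl⟩ : x = z ∧ bs = es ++ y :: ds := by simpa using h3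
        refine ⟨.app f (as ++ x' :: es ++ y' :: ds), .single ?_, .single ?_⟩
        · simpa using Rewrite.congr f (as ++ x' :: es) ds y y' hy
        · simpa using Rewrite.congr f as (es ++ y' :: ds) x x' hx
    · rcases es with _ | ⟨z, es⟩
      · obtain ⟨rfl, rfl⟩ : y = x ∧ ds = bs := by simpa using h3
        have := Joinable.congr (ih y (by simp) x' y' hx hy) f cs ds
        simpa [Joinable] using this
      · obtain ⟨rfl, rfl⟩ : y = z ∧ ds = es ++ x :: bs := by simpa using h3
        refine ⟨.app f (cs ++ y' :: es ++ x' :: bs), .single ?_, .single ?_⟩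
        · simpa using Rewrite.congr f cs (es ++ x' :: bs) y y' hy
        · simpa using Rewrite.congr f (cs ++ y' :: es) bs x x' hx

end rewriting

/-! ### Stepwise unification -/

namespace Term

/-- The variable that a term is, if it is one. -/
def asVar (t : Term) : Option ℕ := t.fold some fun _ _ => none

@[simp] theorem asVar_var (n : ℕ) : (var n).asVar = some n := by simp [asVar]

@[simp] theorem asVar_app (f : ℕ) (ts : List Term) : (app f ts).asVar = none := by simp [asVar]

/-- The root symbol of a term, with junk value `0` at variables. -/
def head (t : Term) : ℕ := t.fold (fun _ => 0) fun f _ => f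

@[simp] theorem head_app (f : ℕ) (ts : List Term) : (app f ts).head = f := by simp [head]

/-- The list of arguments of a term, empty at variables. The fold rebuilds the term
in its first component. -/
def args (t : Term) : List Term :=
  (t.fold (fun n => (var n, [])) fun f l => (app f (l.map Prod.fst), l.map Prod.fst)).2

theorem fold_fst (t : Term) :
    (t.fold (fun n => (var n, ([] : List Term)))
      fun f l => (app f (l.map Prod.fst), l.map Prod.fst)).1 = t := by
  induction t using ind with
  | hv n => simp
  | ha f ts ih =>
    simp only [fold_app, List.map_map, app.injEq, true_and]
    exact (List.map_congr_left ih).trans (List.map_id _)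

@[simp] theorem args_app (f : ℕ) (ts : List Term) : (app f ts).args = ts := by
  simp only [args, fold_app, List.map_map]
  exact (List.map_congr_left fun t _ => fold_fst t).trans (List.map_id _)

end Term

/-- The substitution `[x := u]`. -/
def single (x : ℕ) (u : Term) (n : ℕ) : Term := if n = x then u else .var n

/-- A unification state: the equations still to be solved, and a pair of terms to which the
partial solution has been applied. -/
abbrev UState := List (Term × Term) × (Term × Term)

/-- Apply a substitution to both components of a pair. -/
def psubst (σ : ℕ → Term) (p : Term × Term) : Term × Term := (p.1.subst σ, p.2.subst σ)

/-- Eliminate `x` by means of the equation `x = u`. If the occurs check fails, there is no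
solution, and the trivially joinable pair `(u, u)` is returned. -/
def elimVar (x : ℕ) (u : Term) (E : List (Term × Term)) (p : Term × Term) : UState :=
  if x ∈ u.vars then ([], (u, u)) else (E.map (psubst (single x u)), psubst (single x u) p)

/-- One step of the unification algorithm, acting on the first equation. Failure is
signalled by a trivially joinable pair without equations. -/
def ustep (st : UState) : UState :=
  match st.1 with
  | [] => st
  | e :: E =>
    if e.1 = e.2 then (E, st.2) else
    match e.1.asVar with
    | some x => elimVar x e.2 E st.2
    | none =>
      match e.2.asVar with
      | some x => elimVar x e.1 E st.2
      | none =>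
        if e.1.head = e.2.head ∧ e.1.args.length = e.2.args.length then
          (e.1.args.zip e.2.args ++ E, st.2)
        else ([], (e.1, e.1))

/-- `θ` solves all equations of `E`. -/
def Unif (θ : ℕ → Term) (E : List (Term × Term)) : Prop :=
  ∀ e ∈ E, e.1.subst θ = e.2.subst θ

/-- If `θ` solves the equations then it makes the pair joinable. -/
def UGood (R : List (Term × Term)) (θ : ℕ → Term) (st : UState) : Prop :=
  Unif θ st.1 → Joinable R (st.2.1.subst θ) (st.2.2.subst θ)

/-- A unification state all of whose terms are terms over `sig`. -/
def UWF (sig : List (ℕ × ℕ)) (st : UState) : Prop :=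
  (∀ e ∈ st.1, WFTerm sig e.1 ∧ WFTerm sig e.2) ∧ WFTerm sig st.2.1 ∧ WFTerm sig st.2.2

theorem unif_cons {θ : ℕ → Term} {e : Term × Term} {E : List (Term × Term)} :
    Unif θ (e :: E) ↔ e.1.subst θ = e.2.subst θ ∧ Unif θ E := List.forall_mem_cons

theorem unif_append {θ : ℕ → Term} {E F : List (Term × Term)} :
    Unif θ (E ++ F) ↔ Unif θ E ∧ Unif θ F := List.forall_mem_append

theorem unif_zip {θ : ℕ → Term} {as bs : List Term} (h : as.length = bs.length) :
    Unif θ (as.zip bs) ↔ as.map (subst θ) = bs.map (subst θ) := by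
  induction as generalizing bs with
  | nil => cases bs <;> simp_all [Unif]
  | cons a as ih =>
    cases bs with
    | nil => simp at h
    | cons b bs =>
      rw [List.zip_cons_cons, unif_cons, ih (by simpa using h)]
      simp

theorem subst_single {θ : ℕ → Term} {x : ℕ} {u : Term} (h : θ x = u.subst θ) (t : Term) :
    (t.subst (single x u)).subst θ = t.subst θ := by
  rw [subst_subst]
  refine subst_congr fun n _ => ?_
  by_cases hn : n = x
  · simp [single, hn, h]
  · simp [single, hn]

theorem wf_single {sig : List (ℕ × ℕ)} {x : ℕ} {u : Term} (h : WFTerm sig u) (n : ℕ) :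
    WFTerm sig (single x u n) := by
  unfold single; split
  · exact h
  · exact .var n

/-- An occurs check failure excludes solutions. -/
theorem occurs {θ : ℕ → Term} {x : ℕ} {u : Term} (hu : var x ≠ u) (hx : x ∈ u.vars)
    (h : θ x = u.subst θ) : False := by
  cases u with
  | var n => simp at hx; exact hu (by rw [hx])
  | app f ts =>
    obtain ⟨t, ht, hx⟩ := mem_vars_app.1 hx
    have h1 := size_le_of_mem_vars (σ := θ) hx
    have h2 := size_lt_of_mem (f := f) (List.mem_map_of_mem (f := subst θ) ht)
    rw [h, subst_app] at h1
    omega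

variable {R : List (Term × Term)}

theorem elimVar_sound {θ : ℕ → Term} {x : ℕ} {u : Term} {E : List (Term × Term)}
    {p : Term × Term} (hu : var x ≠ u) (h : UGood R θ (elimVar x u E p)) (hE : Unif θ E)
    (hx : θ x = u.subst θ) : Joinable R (p.1.subst θ) (p.2.subst θ) := by
  unfold elimVar at h
  split at h
  · next h' => exact (occurs hu h' hx).elim
  · have := h (by
      intro e he
      obtain ⟨e, he', rfl⟩ := List.mem_map.1 he
      simpa [psubst, subst_single hx] using hE e he')
    simpa [psubst, subst_single hx] using this

theorem elimVar_complete {sig : List (ℕ × ℕ)} {x : ℕ} {u : Term} {E : List (Term × Term)}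
    {p : Term × Term} (hu : WFTerm sig u) (hwf : UWF sig (E, p))
    (h : ∀ θ, (∀ n, WFTerm sig (θ n)) → Unif θ E → θ x = u.subst θ →
      Joinable R (p.1.subst θ) (p.2.subst θ)) :
    UWF sig (elimVar x u E p) ∧
      ∀ θ, (∀ n, WFTerm sig (θ n)) → UGood R θ (elimVar x u E p) := by
  unfold elimVar
  split
  · exact ⟨⟨by simp, hu, hu⟩, fun θ _ _ => .refl _⟩
  · next hx =>
    have hs : ∀ n, WFTerm sig (single x u n) := wf_single hu
    refine ⟨⟨?_, hwf.2.1.subst hs, hwf.2.2.subst hs⟩, fun θ hθ hE => ?_⟩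
    · intro e he
      obtain ⟨e, he', rfl⟩ := List.mem_map.1 he
      exact ⟨(hwf.1 e he').1.subst hs, (hwf.1 e he').2.subst hs⟩
    · simp only [psubst, subst_subst]
      refine h _ (fun n => (hs n).subst hθ) (fun e he => ?_) ?_
      · have := hE _ (List.mem_map_of_mem he)
        simpa only [psubst, subst_subst] using this
      · simp only [single, if_true]
        refine subst_congr fun n hn => ?_
        have : n ≠ x := fun h => hx (h ▸ hn)
        simp [this]

theorem ustep_sound {θ : ℕ → Term} {st : UState} (h : UGood R θ (ustep st)) : UGood R θ st := by
  obtain ⟨_ | ⟨⟨a, b⟩, E⟩, p⟩ := st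
  · exact h
  intro hE
  obtain ⟨hab, hE'⟩ := unif_cons.1 hE
  clear hE
  rename' hE' => hE
  change Unif θ E at hE
  dsimp only at hab ⊢
  by_cases hne : a = b
  · exact (by simpa [ustep, hne] using h : UGood R θ (E, p)) hE
  cases a with
  | var x =>
    refine elimVar_sound (u := b) (E := E) hne ?_ hE (by simpa using hab)
    simpa [ustep, hne] using h
  | app f as =>
    cases b with
    | var x =>
      refine elimVar_sound (u := app f as) (E := E) (Ne.symm hne) ?_ hE (by simpa using hab.symm)
      simpa [ustep] using h
    | app g bs =>
      simp only [subst_app, app.injEq] at hab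
      have hl : as.length = bs.length := by simpa using congrArg List.length hab.2
      have h' : UGood R θ (as.zip bs ++ E, p) := by
        have : ustep ((app f as, app g bs) :: E, p) = (as.zip bs ++ E, p) := by
          simp only [ustep, if_neg hne, asVar_app, head_app, args_app]
          rw [if_pos ⟨hab.1, hl⟩]
        rwa [this] at h
      exact h' (unif_append.2 ⟨(unif_zip hl).2 hab.2, hE⟩)

theorem ustep_complete {sig : List (ℕ × ℕ)} {st : UState} (hwf : UWF sig st)
    (h : ∀ θ, (∀ n, WFTerm sig (θ n)) → UGood R θ st) :
    UWF sig (ustep st) ∧ ∀ θ, (∀ n, WFTerm sig (θ n)) → UGood R θ (ustep st) := by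
  obtain ⟨_ | ⟨⟨a, b⟩, E⟩, p⟩ := st
  · exact ⟨hwf, h⟩
  have hab := hwf.1 (a, b) (by simp)
  have hwf' : UWF sig (E, p) := ⟨fun e he => hwf.1 e (List.mem_cons_of_mem _ he), hwf.2⟩
  by_cases hne : a = b
  · have : ustep ((a, b) :: E, p) = (E, p) := by simp [ustep, hne]
    rw [this]
    exact ⟨hwf', fun θ hθ hE => h θ hθ (unif_cons.2 ⟨by simp [hne], hE⟩)⟩
  cases a with
  | var x =>
    have : ustep ((var x, b) :: E, p) = elimVar x b E p := by simp [ustep, hne]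
    rw [this]
    exact elimVar_complete hab.2 hwf' fun θ hθ hE hx =>
      h θ hθ (unif_cons.2 ⟨by simpa using hx, hE⟩)
  | app f as =>
    cases b with
    | var x =>
      have : ustep ((app f as, var x) :: E, p) = elimVar x (app f as) E p := by simp [ustep]
      rw [this]
      exact elimVar_complete hab.1 hwf' fun θ hθ hE hx =>
        h θ hθ (unif_cons.2 ⟨by simpa using hx.symm, hE⟩)
    | app g bs =>
      have hne' : ¬ (f = g ∧ as = bs) := by simpa using hne
      have hab1 := (wfTerm_app.1 hab.1).2
      have hab2 := (wfTerm_app.1 hab.2).2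
      by_cases hc : f = g ∧ as.length = bs.length
      · have : ustep ((app f as, app g bs) :: E, p) = (as.zip bs ++ E, p) := by
          simp only [ustep, if_neg hne, asVar_app, head_app, args_app]
          rw [if_pos hc]
        rw [this]
        refine ⟨⟨fun e he => ?_, hwf.2⟩, fun θ hθ hE => h θ hθ ?_⟩
        · rcases List.mem_append.1 he with he | he
          · exact ⟨hab1 _ (List.of_mem_zip he).1, hab2 _ (List.of_mem_zip he).2⟩
          · exact hwf'.1 e he
        · obtain ⟨h1, h2⟩ := unif_append.1 hE
          exact unif_cons.2 ⟨by simp [hc.1, (unif_zip hc.2).1 h1], h2⟩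
      · have : ustep ((app f as, app g bs) :: E, p) = ([], (app f as, app f as)) := by
          simp [ustep, hne', hc]
        rw [this]
        exact ⟨⟨by simp, hab.1, hab.1⟩, fun θ _ _ => .refl _⟩

/-- The set of variables of a list of equations. -/
def evars (E : List (Term × Term)) : Finset ℕ :=
  (E.flatMap fun e => e.1.vars ++ e.2.vars).toFinset

/-- The total size of a list of equations. -/
def esize (E : List (Term × Term)) : ℕ := (E.map fun e => e.1.size + e.2.size).sum

theorem mem_evars {n : ℕ} {E : List (Term × Term)} :
    n ∈ evars E ↔ ∃ e ∈ E, n ∈ e.1.vars ∨ n ∈ e.2.vars := by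
  simp [evars]

theorem esize_zip (as bs : List Term) :
    esize (as.zip bs) ≤ (as.map size).sum + (bs.map size).sum := by
  induction as generalizing bs with
  | nil => simp [esize]
  | cons a as ih =>
    cases bs with
    | nil => simp [esize]
    | cons b bs =>
      have := ih bs
      simp only [esize, List.zip_cons_cons, List.map_cons, List.sum_cons] at this ⊢
      omega

/-- The termination order of unification: fewer variables, or as many variables and
smaller total size. -/
def ULess (F E : List (Term × Term)) : Prop :=
  Prod.Lex (· < ·) (· < ·) ((evars F).card, esize F) ((evars E).card, esize E)

theorem ULess.of_subset {E F : List (Term × Term)} (h : evars F ⊆ evars E)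
    (h' : esize F < esize E) : ULess F E := by
  have := Finset.card_le_card h
  rw [ULess, Prod.lex_iff]
  rcases this.lt_or_eq with h | h
  · exact .inl h
  · exact .inr ⟨h, h'⟩

theorem elimVar_less {x : ℕ} {u : Term} {E F : List (Term × Term)} {p : Term × Term}
    (hx : x ∈ evars F) (hu : ∀ n ∈ u.vars, n ∈ evars F) (hE : evars E ⊆ evars F) :
    (elimVar x u E p).1 = [] ∨ ULess (elimVar x u E p).1 F := by
  unfold elimVar
  split
  · exact .inl rfl
  · next hxu =>
    right
    refine Prod.Lex.left _ _ (Finset.card_lt_card (Finset.ssubset_iff_of_subset ?_ |>.2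
      ⟨x, hx, ?_⟩))
    all_goals
      have key : ∀ n t, n ∈ (subst (single x u) t).vars → n ≠ x ∧ (n ∈ t.vars ∨ n ∈ u.vars) := by
        intro n t hn
        obtain ⟨m, hm, hn⟩ := mem_vars_subst.1 hn
        by_cases hmx : m = x
        · simp only [single, hmx, if_true] at hn
          exact ⟨fun h => hxu (h ▸ hn), .inr hn⟩
        · simp only [single, hmx, if_false, vars_var, List.mem_singleton] at hn
          exact ⟨hn ▸ hmx, .inl (hn ▸ hm)⟩
    · intro n hn
      obtain ⟨e', he', hn⟩ := mem_evars.1 hn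
      obtain ⟨e, he, rfl⟩ := List.mem_map.1 he'
      rcases hn with hn | hn
      · rcases (key _ _ hn).2 with h | h
        · exact hE (mem_evars.2 ⟨e, he, .inl h⟩)
        · exact hu _ h
      · rcases (key _ _ hn).2 with h | h
        · exact hE (mem_evars.2 ⟨e, he, .inr h⟩)
        · exact hu _ h
    · intro hn
      obtain ⟨e', he', hn⟩ := mem_evars.1 hn
      obtain ⟨e, he, rfl⟩ := List.mem_map.1 he'
      rcases hn with hn | hn
      · exact (key _ _ hn).1 rfl
      · exact (key _ _ hn).1 rfl

theorem ustep_less (st : UState) : (ustep st).1 = [] ∨ ULess (ustep st).1 st.1 := by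
  obtain ⟨_ | ⟨⟨a, b⟩, E⟩, p⟩ := st
  · exact .inl rfl
  have hE : evars E ⊆ evars ((a, b) :: E) := fun n hn => by
    obtain ⟨e, he, hn⟩ := mem_evars.1 hn
    exact mem_evars.2 ⟨e, List.mem_cons_of_mem _ he, hn⟩
  have ha : ∀ n ∈ a.vars, n ∈ evars ((a, b) :: E) := fun n hn =>
    mem_evars.2 ⟨_, List.mem_cons_self, .inl hn⟩
  have hb : ∀ n ∈ b.vars, n ∈ evars ((a, b) :: E) := fun n hn =>
    mem_evars.2 ⟨_, List.mem_cons_self, .inr hn⟩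
  by_cases hne : a = b
  · have : ustep ((a, b) :: E, p) = (E, p) := by simp [ustep, hne]
    rw [this]
    refine .inr (.of_subset hE ?_)
    have := size_pos a
    simp only [esize, List.map_cons, List.sum_cons]
    omega
  cases a with
  | var x =>
    have : ustep ((var x, b) :: E, p) = elimVar x b E p := by simp [ustep, hne]
    rw [this]
    exact elimVar_less (ha x (by simp)) hb hE
  | app f as =>
    cases b with
    | var x =>
      have : ustep ((app f as, var x) :: E, p) = elimVar x (app f as) E p := by simp [ustep]
      rw [this]
      exact elimVar_less (hb x (by simp)) ha hE
    | app g bs =>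
      have hne' : ¬ (f = g ∧ as = bs) := by simpa using hne
      by_cases hc : f = g ∧ as.length = bs.length
      · have : ustep ((app f as, app g bs) :: E, p) = (as.zip bs ++ E, p) := by
          simp only [ustep, if_neg hne, asVar_app, head_app, args_app]
          rw [if_pos hc]
        rw [this]
        refine .inr (.of_subset (fun n hn => ?_) ?_)
        · obtain ⟨e, he, hn⟩ := mem_evars.1 hn
          rcases List.mem_append.1 he with he | he
          · rcases hn with hn | hn
            · exact ha n (mem_vars_app.2 ⟨_, (List.of_mem_zip he).1, hn⟩)
            · exact hb n (mem_vars_app.2 ⟨_, (List.of_mem_zip he).2, hn⟩)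
          · exact hE (mem_evars.2 ⟨e, he, hn⟩)
        · have := esize_zip as bs
          simp only [esize, List.map_append, List.sum_append, List.map_cons, List.sum_cons,
            size_app] at this ⊢
          omega
      · have : ustep ((app f as, app g bs) :: E, p) = ([], (app f as, app f as)) := by
          simp [ustep, hne', hc]
        rw [this]
        exact .inl rfl

theorem ustep_terminates (st : UState) : ∃ k, (ustep^[k] st).1 = [] := by
  have wf : WellFounded fun s t : UState => ULess s.1 t.1 :=
    InvImage.wf (fun s : UState => ((evars s.1).card, esize s.1))
      (WellFounded.prod_lex Nat.lt_wfRel.wf Nat.lt_wfRel.wf)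
  induction st using wf.induction with
  | _ st ih =>
    rcases ustep_less st with h | h
    · exact ⟨1, h⟩
    · obtain ⟨k, hk⟩ := ih _ h
      exact ⟨k + 1, hk⟩

/-- The solved form of a state decides joinability under all solutions: the final pair carries
a most general solution, so it is joinable as soon as all instances are, and joinability is closed
under substitution. -/
def USolved (R : List (Term × Term)) (st : UState) : Prop :=
  ∃ k, (ustep^[k] st).1 = [] ∧ Joinable R (ustep^[k] st).2.1 (ustep^[k] st).2.2

theorem USolved.sound {st : UState} (h : USolved R st) (θ : ℕ → Term) : UGood R θ st := by
  obtain ⟨k, _, hj⟩ := h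
  have h0 : UGood R θ (ustep^[k] st) := fun _ => hj.subst θ
  clear hj
  induction k generalizing st with
  | zero => exact h0
  | succ k ih => exact ustep_sound (ih (by assumption) h0)

theorem USolved.complete {sig : List (ℕ × ℕ)} {st : UState} (hwf : UWF sig st)
    (h : ∀ θ, (∀ n, WFTerm sig (θ n)) → UGood R θ st) : USolved R st := by
  obtain ⟨k, hk⟩ := ustep_terminates st
  refine ⟨k, hk, ?_⟩
  have : UWF sig (ustep^[k] st) ∧ ∀ θ, (∀ n, WFTerm sig (θ n)) → UGood R θ (ustep^[k] st) := by
    clear hk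
    induction k with
    | zero => exact ⟨hwf, h⟩
    | succ k ih => rw [Function.iterate_succ_apply']; exact ustep_complete ih.1 ih.2
  have := this.2 var .var (by rw [hk]; simp [Unif])
  rwa [subst_id, subst_id] at this

/-! ### Computing overlaps and critical pairs -/

/-- Given the arguments of a term, each paired with its list of overlaps, the list of
arguments and the list of overlaps in the arguments, the latter as argument lists. -/
def argOverlaps (l : List (Term × List (Term × Term))) : List Term × List (Term × List Term) :=
  l.foldr (fun x acc => (x.1 :: acc.1,
    x.2.map (fun o => (o.1, o.2 :: acc.1)) ++ acc.2.map fun o => (o.1, x.1 :: o.2))) ([], [])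

/-- The step function of `overlapsAux`. -/
def overlapsApp (r : Term) (f : ℕ) (l : List (Term × List (Term × Term))) :
    Term × List (Term × Term) :=
  (app f (argOverlaps l).1, (app f (argOverlaps l).1, r) ::
    (argOverlaps l).2.map fun o => (o.1, app f o.2))

/-- A term together with the list of its overlaps. -/
def overlapsAux (r l : Term) : Term × List (Term × Term) :=
  l.fold (fun n => (var n, [])) (overlapsApp r)

/-- The list of all `(u, s)` with `Overlap r l u s`. -/
def overlaps (r l : Term) : List (Term × Term) := (overlapsAux r l).2

theorem argOverlaps_fst (l : List (Term × List (Term × Term))) :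
    (argOverlaps l).1 = l.map Prod.fst := by
  induction l with
  | nil => rfl
  | cons x l ih => simpa [argOverlaps] using ih

theorem mem_argOverlaps {F : Term → Term × List (Term × Term)} {ts : List Term}
    (hF : ∀ t, (F t).1 = t) {u : Term} {ss : List Term} :
    (u, ss) ∈ (argOverlaps (ts.map F)).2 ↔
      ∃ as t bs s, ts = as ++ t :: bs ∧ (u, s) ∈ (F t).2 ∧ ss = as ++ s :: bs := by
  induction ts generalizing ss with
  | nil => simp [argOverlaps]
  | cons x ts ih =>
    have h1 : (argOverlaps (ts.map F)).1 = ts := by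
      rw [argOverlaps_fst, List.map_map]
      exact (List.map_congr_left fun t _ => hF t).trans (List.map_id _)
    have h2 : (argOverlaps ((x :: ts).map F)).2 = (F x).2.map (fun o => (o.1, o.2 :: ts)) ++
        (argOverlaps (ts.map F)).2.map fun o => (o.1, x :: o.2) := by
      conv_rhs => enter [1, 1, o]; rw [← h1]
      simp [argOverlaps, hF]
    rw [h2, List.mem_append, List.mem_map, List.mem_map]
    constructor
    · rintro (⟨⟨u', s⟩, h, he⟩ | ⟨⟨u', ss'⟩, h, he⟩)
      · obtain ⟨rfl, rfl⟩ := Prod.mk.inj he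
        exact ⟨[], x, ts, s, rfl, h, rfl⟩
      · obtain ⟨rfl, rfl⟩ := Prod.mk.inj he
        obtain ⟨as, t, bs, s, rfl, h, rfl⟩ := ih.1 h
        exact ⟨x :: as, t, bs, s, rfl, h, rfl⟩
    · rintro ⟨as, t, bs, s, he, h, rfl⟩
      rcases as with _ | ⟨a, as⟩
      · obtain ⟨rfl, rfl⟩ := List.cons.inj he
        exact .inl ⟨(u, s), h, rfl⟩
      · obtain ⟨rfl, rfl⟩ := List.cons.inj he
        exact .inr ⟨(u, as ++ s :: bs), ih.2 ⟨as, t, bs, s, rfl, h, rfl⟩, rfl⟩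

theorem overlapsAux_fst (r l : Term) : (overlapsAux r l).1 = l := by
  induction l using ind with
  | hv n => simp [overlapsAux]
  | ha f ts ih =>
    simp only [overlapsAux, fold_app, overlapsApp, argOverlaps_fst, List.map_map, app.injEq,
      true_and]
    exact (List.map_congr_left ih).trans (List.map_id _)

theorem mem_overlaps_app {r u s : Term} {f : ℕ} {ts : List Term} :
    (u, s) ∈ overlaps r (app f ts) ↔ (u = app f ts ∧ s = r) ∨
      ∃ as t bs s', ts = as ++ t :: bs ∧ (u, s') ∈ overlaps r t ∧ s = app f (as ++ s' :: bs) := by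
  have h : overlapsAux r (app f ts) = overlapsApp r f (ts.map (overlapsAux r)) := by
    simp only [overlapsAux, fold_app]; rfl
  have h' : (app f (argOverlaps (ts.map (overlapsAux r))).1) = app f ts := by
    have := overlapsAux_fst r (app f ts)
    rwa [h] at this
  simp only [overlaps, h, overlapsApp, h', List.mem_cons, Prod.mk.injEq, List.mem_map]
  refine or_congr Iff.rfl ?_
  constructor
  · rintro ⟨⟨u', ss⟩, hm, rfl, rfl⟩
    obtain ⟨as, t, bs, s, rfl, hm', rfl⟩ := (mem_argOverlaps (overlapsAux_fst r)).1 hm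
    exact ⟨as, t, bs, s, rfl, hm', rfl⟩
  · rintro ⟨as, t, bs, s, rfl, hm, rfl⟩
    exact ⟨(u, as ++ s :: bs), (mem_argOverlaps (overlapsAux_fst r)).2 ⟨as, t, bs, s, rfl, hm, rfl⟩,
      rfl, rfl⟩

theorem mem_overlaps {r l u s : Term} : (u, s) ∈ overlaps r l ↔ Overlap r l u s := by
  constructor
  · intro h
    induction l using ind generalizing u s with
    | hv n => simp [overlaps, overlapsAux] at h
    | ha f ts ih =>
      rcases mem_overlaps_app.1 h with ⟨rfl, rfl⟩ | ⟨as, t, bs, s, rfl, h', rfl⟩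
      · exact .root f ts
      · exact .arg f as bs (ih t (by simp) h')
  · intro h
    induction h with
    | root f ts => exact mem_overlaps_app.2 (.inl ⟨rfl, rfl⟩)
    | arg f as bs _ ih => exact mem_overlaps_app.2 (.inr ⟨as, _, bs, _, rfl, ih, rfl⟩)

theorem Overlap.wf {sig : List (ℕ × ℕ)} {r l u s : Term} (h : Overlap r l u s)
    (hr : WFTerm sig r) (hl : WFTerm sig l) : WFTerm sig u ∧ WFTerm sig s := by
  induction h with
  | root f ts => exact ⟨hl, hr⟩
  | arg f as bs _ ih =>
    obtain ⟨h1, h2⟩ := wfTerm_app.1 hl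
    obtain ⟨h3, h4⟩ := ih (h2 _ (by simp))
    refine ⟨h3, wfTerm_app.2 ⟨by simpa using h1, fun t ht => ?_⟩⟩
    simp only [List.mem_append, List.mem_cons] at ht
    rcases ht with ht | rfl | ht
    · exact h2 t (by simp [ht])
    · exact h4
    · exact h2 t (by simp [ht])

/-- The unification problem of an overlap `o` of the rule `q` into the rule `p`, carrying the
two reducts. -/
def cpState (p q o : Term × Term) : UState :=
  ([(o.1, q.1.subst ren1)], (p.2.subst ren0, o.2))

/-- The unification problems of all overlaps between rules of `R`. -/
def cpStates (R : List (Term × Term)) : List UState :=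
  R.flatMap fun p => R.flatMap fun q =>
    (overlaps (q.2.subst ren1) (p.1.subst ren0)).map (cpState p q)

theorem mem_cpStates {R : List (Term × Term)} {st : UState} :
    st ∈ cpStates R ↔ ∃ p ∈ R, ∃ q ∈ R, ∃ u s,
      Overlap (q.2.subst ren1) (p.1.subst ren0) u s ∧ st = cpState p q (u, s) := by
  simp only [cpStates, List.mem_flatMap, List.mem_map, Prod.exists, mem_overlaps]
  grind

/-- Weak confluence is equivalent to the joinability of finitely many critical pairs. -/
theorem wcr_iff {sig : List (ℕ × ℕ)} {R : List (Term × Term)} (hR : WFTRS sig R) :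
    (∀ t, WFTerm sig t → WCRon R t) ↔ ∀ st ∈ cpStates R, USolved R st := by
  constructor
  · intro h st hst
    obtain ⟨p, hp, q, hq, u, s, hO, rfl⟩ := mem_cpStates.1 hst
    obtain ⟨hp1, hp2, -, -⟩ := hR.2 p hp
    obtain ⟨hq1, hq2, -, -⟩ := hR.2 q hq
    have h0 : ∀ n, WFTerm sig (ren0 n) := fun n => .var _
    have h1 : ∀ n, WFTerm sig (ren1 n) := fun n => .var _
    obtain ⟨hu, hs⟩ := hO.wf (hq2.subst h1) (hp1.subst h0)
    refine USolved.complete (sig := sig) ⟨?_, hp2.subst h0, hs⟩ fun θ hθ hE => ?_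
    · rintro e he
      obtain rfl := List.mem_singleton.1 he
      exact ⟨hu, hq1.subst h1⟩
    · have hE : u.subst θ = (q.1.subst ren1).subst θ := hE _ (List.mem_singleton.2 rfl)
      refine h ((p.1.subst ren0).subst θ) ((hp1.subst h0).subst hθ) _ _ ?_ (hO.rewrite ?_)
      · exact (Rewrite.of_mem hp ren0).subst θ
      · rw [hE]; exact (Rewrite.of_mem hq ren1).subst θ
  · intro h t _
    refine CPJoinable.wcr (fun p hp q hq u s hO θ hθ => ?_) t
    refine (h _ (mem_cpStates.2 ⟨p, hp, q, hq, u, s, hO, rfl⟩)).sound θ ?_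
    intro e he
    obtain rfl := List.mem_singleton.1 he
    exact hθ

/-! ### Certificates for reductions -/

/-- The substitution given by a list, equal to the identity beyond its length. -/
def lsub (l : List Term) (n : ℕ) : Term := (l[n]?).getD (var n)

/-- A certificate for a rewrite step: the rule, the substitution and the resulting term. -/
abbrev Cert := (Term × Term) × List Term × Term

/-- Check a certificate for a rewrite step. -/
def CertOK (R : List (Term × Term)) (s : Term) (c : Cert) : Prop :=
  c.1 ∈ R ∧ (c.1.1.subst (lsub c.2.1), c.2.2) ∈ overlaps (c.1.2.subst (lsub c.2.1)) s

instance (R : List (Term × Term)) (s : Term) (c : Cert) : Decidable (CertOK R s c) :=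
  inferInstanceAs (Decidable (_ ∧ _))

/-- Follow a certified reduction, failing with `none` if a step is wrong. -/
def runRed (R : List (Term × Term)) (s : Term) (cs : List Cert) : Option Term :=
  cs.foldl (fun o c => o.bind fun s => if CertOK R s c then some c.2.2 else none) (some s)

theorem Overlap.rewrite' {R : List (Term × Term)} {r l s u : Term} (h : Overlap r l u s)
    (hr : Rewrite R u r) : Rewrite R l s := by
  have := h.rewrite (θ := var) (R := R) (by rwa [subst_id, subst_id])
  rwa [subst_id, subst_id] at this

theorem CertOK.rewrite {R : List (Term × Term)} {s : Term} {c : Cert} (h : CertOK R s c) :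
    Rewrite R s c.2.2 :=
  (mem_overlaps.1 h.2).rewrite' (.of_mem h.1 _)

theorem exists_cert {R : List (Term × Term)} (hR : ∀ p ∈ R, ∀ n, p.1 ≠ var n) {s s' : Term}
    (h : Rewrite R s s') : ∃ c, CertOK R s c ∧ c.2.2 = s' := by
  suffices ∃ p ∈ R, ∃ l, Overlap (p.2.subst (lsub l)) s (p.1.subst (lsub l)) s' by
    obtain ⟨p, hp, l, hl⟩ := this
    exact ⟨(p, l, s'), ⟨hp, mem_overlaps.2 hl⟩, rfl⟩
  induction h with
  | rule l r σ h =>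
    obtain ⟨N, hN⟩ : ∃ N, ∀ n ∈ l.vars ++ r.vars, n < N :=
      ⟨((l.vars ++ r.vars).foldr max 0) + 1, fun n hn =>
        Nat.lt_succ_of_le (List.le_max_of_le' 0 hn le_rfl)⟩
    have hs : ∀ n ∈ l.vars ++ r.vars, lsub ((List.range N).map σ) n = σ n := fun n hn => by
      simp [lsub, hN n hn]
    refine ⟨_, h, (List.range N).map σ, ?_⟩
    rw [subst_congr (t := l) fun n hn => hs n (by simp [hn]),
      subst_congr (t := r) fun n hn => hs n (by simp [hn])]
    cases l with
    | var n => exact (hR _ h n rfl).elim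
    | app f ts => rw [subst_app]; exact .root _ _
  | congr f as bs t t' _ ih =>
    obtain ⟨p, hp, l, hl⟩ := ih
    exact ⟨p, hp, l, hl.arg f as bs⟩

theorem runRed_append_singleton {R : List (Term × Term)} {s : Term} {cs : List Cert} {c : Cert} :
    runRed R s (cs ++ [c]) =
      (runRed R s cs).bind fun s => if CertOK R s c then some c.2.2 else none := by
  simp [runRed]

theorem runRed_sound {R : List (Term × Term)} {s t : Term} {cs : List Cert}
    (h : runRed R s cs = some t) : Reduces R s t := by
  induction cs using List.reverseRecOn generalizing t with
  | nil => obtain rfl : s = t := by simpa [runRed] using h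
           exact .refl
  | append_singleton cs c ih =>
    rw [runRed_append_singleton, Option.bind_eq_some_iff] at h
    obtain ⟨u, hu, h⟩ := h
    split at h
    · next hc =>
      cases h
      exact (ih hu).tail hc.rewrite
    · cases h

theorem exists_runRed {R : List (Term × Term)} (hR : ∀ p ∈ R, ∀ n, p.1 ≠ var n) {s t : Term}
    (h : Reduces R s t) : ∃ cs, runRed R s cs = some t := by
  induction h with
  | refl => exact ⟨[], rfl⟩
  | tail _ h ih =>
    obtain ⟨cs, hcs⟩ := ih
    obtain ⟨c, hc, rfl⟩ := exists_cert hR h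
    exact ⟨cs ++ [c], by simp [runRed_append_singleton, hcs, hc]⟩

/-- A certificate that a state is solved: the number of unification steps, and the two
reductions to a common reduct. -/
def SolvedBy (R : List (Term × Term)) (st : UState) (c : ℕ × List Cert × List Cert) : Prop :=
  (ustep^[c.1] st).1 = [] ∧
    (runRed R (ustep^[c.1] st).2.1 c.2.1).isSome = true ∧
    runRed R (ustep^[c.1] st).2.1 c.2.1 = runRed R (ustep^[c.1] st).2.2 c.2.2

theorem uSolved_iff {R : List (Term × Term)} (hR : ∀ p ∈ R, ∀ n, p.1 ≠ var n) {st : UState} :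
    USolved R st ↔ ∃ c, SolvedBy R st c := by
  constructor
  · rintro ⟨k, hk, d, h1, h2⟩
    obtain ⟨c1, h1⟩ := exists_runRed hR h1
    obtain ⟨c2, h2⟩ := exists_runRed hR h2
    exact ⟨(k, c1, c2), hk, by simp [h1], by simp [h1, h2]⟩
  · rintro ⟨⟨k, c1, c2⟩, hk, h1, h2⟩
    obtain ⟨d, hd⟩ := Option.isSome_iff_exists.1 h1
    exact ⟨k, hk, d, runRed_sound hd, runRed_sound (h2 ▸ hd)⟩

theorem exists_list {α β : Type} {P : α → β → Prop} (l : List α) (h : ∀ a ∈ l, ∃ b, P a b) :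
    ∃ bs : List β, ∀ a ∈ l, ∃ b ∈ bs, P a b := by
  induction l with
  | nil => exact ⟨[], by simp⟩
  | cons a l ih =>
    obtain ⟨b, hb⟩ := h a (by simp)
    obtain ⟨bs, hbs⟩ := ih fun x hx => h x (by simp [hx])
    refine ⟨b :: bs, fun x hx => ?_⟩
    rcases List.mem_cons.1 hx with rfl | hx
    · exact ⟨b, by simp, hb⟩
    · obtain ⟨c, hc, h⟩ := hbs x hx
      exact ⟨c, by simp [hc], h⟩

theorem wcr_iff_cert {sig : List (ℕ × ℕ)} {R : List (Term × Term)} (hR : WFTRS sig R) :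
    (∀ t, WFTerm sig t → WCRon R t) ↔
      ∃ cs : List (ℕ × List Cert × List Cert), ∀ st ∈ cpStates R, ∃ c ∈ cs, SolvedBy R st c := by
  have hv : ∀ p ∈ R, ∀ n, p.1 ≠ var n := fun p hp => (hR.2 p hp).2.2.1
  rw [wcr_iff hR]
  constructor
  · exact fun h => exists_list _ fun st hst => (uSolved_iff hv).1 (h st hst)
  · rintro ⟨cs, h⟩ st hst
    obtain ⟨c, -, hc⟩ := h st hst
    exact (uSolved_iff hv).2 ⟨c, hc⟩

/-! ### Primitive recursiveness of the certificate check -/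

section primrec

variable {α β γ : Type} [Primcodable α] [Primcodable β] [Primcodable γ]

theorem primrec₂_mk {f : α → β → γ} (h : Primrec fun p : α × β => f p.1 p.2) : Primrec₂ f := h

theorem primrec_subst {σ : α → ℕ → Term} {t : α → Term} (hσ : Primrec₂ σ) (ht : Primrec t) :
    Primrec fun a => (t a).subst (σ a) :=
  (primrec_fold (af := fun _ f ts => app f ts) hσ (primrec₂_mk (Primrec.comp primrec_app Primrec.snd))
    ht).of_eq fun _ => (subst_eq_fold _ _).symm

theorem primrec_vars : Primrec Term.vars :=
  primrec_fold (α := Term) (vf := fun _ n => [n]) (af := fun _ _ ls => ls.flatten)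
    (Primrec.list_cons.comp Primrec.snd (Primrec.const [])).to₂
    (Primrec.list_flatten.comp (Primrec.snd.comp Primrec.snd)).to₂ Primrec.id

theorem primrec_asVar : Primrec Term.asVar :=
  primrec_fold (α := Term) (vf := fun _ n => some n) (af := fun _ _ _ => none)
    (Primrec.option_some.comp Primrec.snd).to₂ (Primrec.const none).to₂ Primrec.id

theorem primrec_head : Primrec Term.head :=
  primrec_fold (α := Term) (vf := fun _ _ => 0) (af := fun _ f _ => f)
    (Primrec.const 0).to₂ (Primrec.fst.comp Primrec.snd).to₂ Primrec.id

theorem primrec_args : Primrec Term.args := by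
  have h : Primrec₂ fun (_ : Term) (p : ℕ × List (Term × List Term)) => p.2.map Prod.fst :=
    (Primrec.list_map (Primrec.snd.comp Primrec.snd) (Primrec.fst.comp Primrec.snd).to₂).to₂
  exact Primrec.snd.comp (primrec_fold (α := Term) (vf := fun _ n => (var n, []))
    (af := fun _ f l => (app f (l.map Prod.fst), l.map Prod.fst))
    (Primrec.pair (primrec_var.comp Primrec.snd) (Primrec.const [])).to₂
    (Primrec.pair (primrec_app.comp (Primrec.fst.comp Primrec.snd) h) h).to₂ Primrec.id)

theorem PrimrecPred.forallMem {f : α → List β} {P : α → β → Prop} (hf : Primrec f)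
    (hP : PrimrecRel P) : PrimrecPred fun a => ∀ b ∈ f a, P a b :=
  hP.swap.forall_mem_list.comp hf Primrec.id

theorem PrimrecPred.existsMem {f : α → List β} {P : α → β → Prop} (hf : Primrec f)
    (hP : PrimrecRel P) : PrimrecPred fun a => ∃ b ∈ f a, P a b :=
  hP.swap.exists_mem_list.comp hf Primrec.id

theorem PrimrecPred.mem {f : α → List β} {g : α → β} (hf : Primrec f) (hg : Primrec g) :
    PrimrecPred fun a => g a ∈ f a :=
  (PrimrecPred.existsMem (P := fun a b => b = g a) hf
    (Primrec.eq.comp Primrec.snd (hg.comp Primrec.fst))).of_eq fun a => by simp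

theorem primrec_zip : Primrec₂ fun as bs : List Term => as.zip bs := by
  -- `zip` is read off from the indices
  have h : Primrec fun p : List Term × List Term => (List.range p.1.length).filterMap fun i =>
      (p.1[i]?).bind fun a => (p.2[i]?).map fun b => (a, b) := by
    refine Primrec.listFilterMap (Primrec.list_range.comp (Primrec.list_length.comp Primrec.fst)) ?_
    refine Primrec.option_bind (Primrec.list_getElem?.comp (Primrec.fst.comp Primrec.fst)
      Primrec.snd) ?_
    refine Primrec.option_map (Primrec.list_getElem?.comp
      (Primrec.snd.comp (Primrec.fst.comp Primrec.fst)) (Primrec.snd.comp Primrec.fst)) ?_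
    exact (Primrec.pair (Primrec.snd.comp Primrec.fst) Primrec.snd).to₂
  refine h.of_eq fun ⟨as, bs⟩ => ?_
  show _ = as.zip bs
  induction as generalizing bs with
  | nil => simp
  | cons a as ih =>
    cases bs with
    | nil =>
      simp only [List.zip_nil_right, List.filterMap_eq_nil_iff]
      intro i _
      cases (a :: as)[i]? <;> simp
    | cons b bs =>
      simp only [List.length_cons, List.range_succ_eq_map, List.zip_cons_cons, ← ih bs]
      simp [List.filterMap_map]

theorem primrec_single : Primrec₂ fun (p : ℕ × Term) (n : ℕ) => single p.1 p.2 n :=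
  Primrec.ite (Primrec.eq.comp Primrec.snd (Primrec.fst.comp Primrec.fst))
    (Primrec.snd.comp Primrec.fst) (primrec_var.comp Primrec.snd)

theorem primrec_psubst {x : α → ℕ} {u : α → Term} {p : α → Term × Term} (hx : Primrec x)
    (hu : Primrec u) (hp : Primrec p) : Primrec fun a => psubst (single (x a) (u a)) (p a) := by
  have h : Primrec₂ fun a n => single (x a) (u a) n :=
    primrec_single.comp ((hx.pair hu).comp Primrec.fst) Primrec.snd
  exact Primrec.pair (primrec_subst h (Primrec.fst.comp hp))
    (primrec_subst h (Primrec.snd.comp hp))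

theorem primrec_elimVar {x : α → ℕ} {u : α → Term} {E : α → List (Term × Term)}
    {p : α → Term × Term} (hx : Primrec x) (hu : Primrec u) (hE : Primrec E) (hp : Primrec p) :
    Primrec fun a => elimVar (x a) (u a) (E a) (p a) := by
  refine Primrec.ite (PrimrecPred.mem (primrec_vars.comp hu) hx)
    (Primrec.pair (Primrec.const []) (hu.pair hu)) (Primrec.pair ?_ (primrec_psubst hx hu hp))
  exact Primrec.list_map hE (primrec_psubst (hx.comp Primrec.fst) (hu.comp Primrec.fst)
    Primrec.snd).to₂

theorem primrec_ustep : Primrec ustep := by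
  let h : UState → (Term × Term) × List (Term × Term) → UState := fun st q =>
    if q.1.1 = q.1.2 then (q.2, st.2) else
      Option.casesOn q.1.1.asVar
        (Option.casesOn q.1.2.asVar
          (if q.1.1.head = q.1.2.head ∧ q.1.1.args.length = q.1.2.args.length then
            (q.1.1.args.zip q.1.2.args ++ q.2, st.2) else ([], (q.1.1, q.1.1)))
          (fun x => elimVar x q.1.1 q.2 st.2))
        (fun x => elimVar x q.1.2 q.2 st.2)
  have hh : Primrec₂ h := by
    refine primrec₂_mk ?_
    have he : Primrec fun q : UState × (Term × Term) × List (Term × Term) => q.2.1 :=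
      Primrec.fst.comp Primrec.snd
    have h1 := Primrec.fst.comp he
    have h2 := Primrec.snd.comp he
    have hE : Primrec fun q : UState × (Term × Term) × List (Term × Term) => q.2.2 :=
      Primrec.snd.comp Primrec.snd
    have hp : Primrec fun q : UState × (Term × Term) × List (Term × Term) => q.1.2 :=
      Primrec.snd.comp Primrec.fst
    refine Primrec.ite (Primrec.eq.comp h1 h2) (hE.pair hp) ?_
    refine Primrec.option_casesOn (primrec_asVar.comp h1) ?_ ?_
    · refine Primrec.option_casesOn (primrec_asVar.comp h2) ?_ ?_
      · refine Primrec.ite (PrimrecPred.and ?_ ?_) (Primrec.pair ?_ hp)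
          (Primrec.pair (Primrec.const ([] : List (Term × Term))) (h1.pair h1))
        · exact Primrec.eq.comp (primrec_head.comp h1) (primrec_head.comp h2)
        · exact Primrec.eq.comp (Primrec.list_length.comp (primrec_args.comp h1))
            (Primrec.list_length.comp (primrec_args.comp h2))
        · exact Primrec.list_append.comp
            (primrec_zip.comp (primrec_args.comp h1) (primrec_args.comp h2)) hE
      · exact (primrec_elimVar Primrec.snd (h1.comp Primrec.fst) (hE.comp Primrec.fst)
          (hp.comp Primrec.fst)).to₂
    · exact (primrec_elimVar Primrec.snd (h2.comp Primrec.fst) (hE.comp Primrec.fst)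
        (hp.comp Primrec.fst)).to₂
  refine (Primrec.list_casesOn Primrec.fst Primrec.id hh).of_eq fun ⟨E, p⟩ => ?_
  cases E with
  | nil => rfl
  | cons e E =>
    simp only [ustep, h]
    congr 1
    cases e.1.asVar with
    | none => cases e.2.asVar <;> rfl
    | some x => rfl

theorem primrec_argOverlaps : Primrec argOverlaps := by
  refine Primrec.list_foldr (h := fun (_ : List (Term × List (Term × Term)))
    (q : (Term × List (Term × Term)) × List Term × List (Term × List Term)) =>
      ((q.1.1 :: q.2.1, q.1.2.map (fun o => (o.1, o.2 :: q.2.1)) ++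
        q.2.2.map fun o => (o.1, q.1.1 :: o.2)) : List Term × List (Term × List Term)))
    Primrec.id (Primrec.const ([], [])) (primrec₂_mk ?_)
  have hx : Primrec fun q : List (Term × List (Term × Term)) ×
      (Term × List (Term × Term)) × List Term × List (Term × List Term) => q.2.1 :=
    Primrec.fst.comp Primrec.snd
  have ha : Primrec fun q : List (Term × List (Term × Term)) ×
      (Term × List (Term × Term)) × List Term × List (Term × List Term) => q.2.2 :=
    Primrec.snd.comp Primrec.snd
  refine Primrec.pair (Primrec.list_cons.comp (Primrec.fst.comp hx) (Primrec.fst.comp ha))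
    (Primrec.list_append.comp ?_ ?_)
  · refine Primrec.list_map (Primrec.snd.comp hx) (primrec₂_mk ?_)
    exact Primrec.pair (Primrec.fst.comp Primrec.snd) (Primrec.list_cons.comp
      (Primrec.snd.comp Primrec.snd) ((Primrec.fst.comp ha).comp Primrec.fst))
  · refine Primrec.list_map (Primrec.snd.comp ha) (primrec₂_mk ?_)
    exact Primrec.pair (Primrec.fst.comp Primrec.snd) (Primrec.list_cons.comp
      ((Primrec.fst.comp hx).comp Primrec.fst) (Primrec.snd.comp Primrec.snd))

theorem primrec_overlaps {r l : α → Term} (hr : Primrec r) (hl : Primrec l) :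
    Primrec fun a => overlaps (r a) (l a) := by
  refine Primrec.snd.comp (primrec_fold (vf := fun _ n => (var n, []))
    (af := fun a f ls => overlapsApp (r a) f ls)
    (Primrec.pair (primrec_var.comp Primrec.snd) (Primrec.const [])).to₂ (primrec₂_mk ?_) hl)
  have hf : Primrec fun q : α × ℕ × List (Term × List (Term × Term)) => q.2.1 :=
    Primrec.fst.comp Primrec.snd
  have ha := primrec_argOverlaps.comp
    (Primrec.snd.comp Primrec.snd : Primrec fun q : α × ℕ × List (Term × List (Term × Term)) => _)
  have ht := primrec_app.comp hf (Primrec.fst.comp ha)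
  refine Primrec.pair ht (Primrec.list_cons.comp (ht.pair (hr.comp Primrec.fst)) ?_)
  refine Primrec.list_map (Primrec.snd.comp ha) (primrec₂_mk ?_)
  exact Primrec.pair (Primrec.fst.comp Primrec.snd)
    (primrec_app.comp (hf.comp Primrec.fst) (Primrec.snd.comp Primrec.snd))

theorem primrec_ren0 : Primrec ren0 :=
  primrec_var.comp (Primrec.nat_mul.comp (Primrec.const 2) Primrec.id)

theorem primrec_ren1 : Primrec ren1 :=
  primrec_var.comp (Primrec.succ.comp (Primrec.nat_mul.comp (Primrec.const 2) Primrec.id))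

theorem primrec_cpStates : Primrec cpStates := by
  have hp : Primrec fun a : (List (Term × Term) × (Term × Term)) × (Term × Term) => a.1.2 :=
    Primrec.snd.comp Primrec.fst
  have hq : Primrec fun a : (List (Term × Term) × (Term × Term)) × (Term × Term) => a.2 :=
    Primrec.snd
  have h0 : ∀ {β : Type} [Primcodable β] {t : β → Term}, Primrec t →
      Primrec fun b => (t b).subst ren0 := fun ht =>
    primrec_subst (σ := fun _ n => ren0 n) (primrec_ren0.comp Primrec.snd).to₂ ht
  have h1 : ∀ {β : Type} [Primcodable β] {t : β → Term}, Primrec t →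
      Primrec fun b => (t b).subst ren1 := fun ht =>
    primrec_subst (σ := fun _ n => ren1 n) (primrec_ren1.comp Primrec.snd).to₂ ht
  refine Primrec.list_flatMap Primrec.id (primrec₂_mk (Primrec.list_flatMap Primrec.fst
    (primrec₂_mk (Primrec.list_map (primrec_overlaps (h1 (Primrec.snd.comp hq))
      (h0 (Primrec.fst.comp hp))) (primrec₂_mk ?_)))))
  exact Primrec.pair (Primrec.list_cons.comp (Primrec.pair (Primrec.fst.comp Primrec.snd)
      (h1 (Primrec.fst.comp (hq.comp Primrec.fst)))) (Primrec.const []))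
    (Primrec.pair (h0 (Primrec.snd.comp (hp.comp Primrec.fst))) (Primrec.snd.comp Primrec.snd))

theorem primrec_lsub : Primrec₂ lsub :=
  Primrec.option_getD.comp (Primrec.list_getElem?.comp Primrec.fst Primrec.snd)
    (primrec_var.comp Primrec.snd)

theorem primrec_certOK {R : α → List (Term × Term)} {s : α → Term} {c : α → Cert}
    (hR : Primrec R) (hs : Primrec s) (hc : Primrec c) :
    PrimrecPred fun a => CertOK (R a) (s a) (c a) := by
  have hσ : Primrec₂ fun a n => lsub (c a).2.1 n :=
    primrec_lsub.comp ((Primrec.fst.comp (Primrec.snd.comp hc)).comp Primrec.fst) Primrec.snd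
  have hp := Primrec.fst.comp hc
  exact (PrimrecPred.mem hR hp).and (PrimrecPred.mem
    (primrec_overlaps (primrec_subst hσ (Primrec.snd.comp hp)) hs)
    (Primrec.pair (primrec_subst hσ (Primrec.fst.comp hp)) (Primrec.snd.comp (Primrec.snd.comp hc))))

theorem primrec_runRed {R : α → List (Term × Term)} {s : α → Term} {cs : α → List Cert}
    (hR : Primrec R) (hs : Primrec s) (hc : Primrec cs) :
    Primrec fun a => runRed (R a) (s a) (cs a) := by
  refine Primrec.list_foldl (h := fun a (q : Option Term × Cert) =>
    q.1.bind fun s => if CertOK (R a) s q.2 then some q.2.2.2 else none)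
    hc (Primrec.option_some.comp hs) (primrec₂_mk ?_)
  refine Primrec.option_bind (Primrec.fst.comp Primrec.snd) (primrec₂_mk ?_)
  have hcert : Primrec fun x : (α × Option Term × Cert) × Term => x.1.2.2 :=
    Primrec.snd.comp (Primrec.snd.comp Primrec.fst)
  exact Primrec.ite (primrec_certOK (hR.comp (Primrec.fst.comp Primrec.fst)) Primrec.snd hcert)
    (Primrec.option_some.comp (Primrec.snd.comp (Primrec.snd.comp hcert))) (Primrec.const none)

theorem primrec_solvedBy {R : α → List (Term × Term)} {st : α → UState}
    {c : α → ℕ × List Cert × List Cert} (hR : Primrec R) (hst : Primrec st) (hc : Primrec c) :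
    PrimrecPred fun a => SolvedBy (R a) (st a) (c a) := by
  have hu : Primrec fun a => ustep^[(c a).1] (st a) :=
    Primrec.nat_iterate (Primrec.fst.comp hc) hst (primrec_ustep.comp Primrec.snd).to₂
  have hp := Primrec.snd.comp hu
  have h1 := primrec_runRed hR (Primrec.fst.comp hp) (Primrec.fst.comp (Primrec.snd.comp hc))
  have h2 := primrec_runRed hR (Primrec.snd.comp hp) (Primrec.snd.comp (Primrec.snd.comp hc))
  exact (Primrec.eq.comp (Primrec.fst.comp hu) (Primrec.const [])).and
    ((Primrec.eq.comp (Primrec.option_isSome.comp h1) (Primrec.const true)).and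
      (Primrec.eq.comp h1 h2))

/-- Boolean version of `WFTerm`. -/
def wfb (sig : List (ℕ × ℕ)) (t : Term) : Bool :=
  t.fold (fun _ => true) fun f bs => decide ((f, bs.length) ∈ sig ∧ ∀ b ∈ bs, b = true)

theorem wfb_iff {sig : List (ℕ × ℕ)} {t : Term} : wfb sig t = true ↔ WFTerm sig t := by
  induction t using ind with
  | hv n => simpa [wfb] using WFTerm.var n
  | ha f ts ih =>
    rw [wfTerm_app]
    simp only [wfb, fold_app, decide_eq_true_eq, List.length_map, List.forall_mem_map]
    exact and_congr Iff.rfl (forall₂_congr ih)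

theorem primrec_wfTerm {sig : α → List (ℕ × ℕ)} {t : α → Term} (hs : Primrec sig)
    (ht : Primrec t) : PrimrecPred fun a => WFTerm (sig a) (t a) := by
  have h : Primrec fun a => wfb (sig a) (t a) := by
    refine primrec_fold (vf := fun _ _ => true) (af := fun a f bs =>
      decide ((f, bs.length) ∈ sig a ∧ ∀ b ∈ bs, b = true)) (Primrec.const true).to₂
      (PrimrecPred.decide ?_) ht
    have h2 : Primrec fun q : α × ℕ × List Bool => q.2.2 := Primrec.snd.comp Primrec.snd
    exact (PrimrecPred.mem (hs.comp Primrec.fst) (Primrec.pair (Primrec.fst.comp Primrec.snd)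
      (Primrec.list_length.comp h2))).and (PrimrecPred.forallMem h2
        (P := fun _ b => b = true) (Primrec.eq.comp Primrec.snd (Primrec.const true)))
  exact (Primrec.eq.comp h (Primrec.const true)).of_eq fun a => wfb_iff

theorem wfTRS_iff {sig : List (ℕ × ℕ)} {R : List (Term × Term)} : WFTRS sig R ↔
    (∀ p ∈ sig, ∀ q ∈ sig, ¬ p.1 = q.1 ∨ p.2 = q.2) ∧ ∀ p ∈ R, WFTerm sig p.1 ∧ WFTerm sig p.2 ∧
      p.1.asVar = none ∧ ∀ n ∈ p.2.vars, n ∈ p.1.vars := by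
  unfold WFTRS WFSig
  refine and_congr ?_ ?_
  · simp only [imp_iff_not_or]
  · refine forall₂_congr fun p _ => and_congr Iff.rfl (and_congr Iff.rfl (and_congr ?_ ?_))
    · cases p.1 <;> simp
    · simp only [mem_vars]

theorem primrec_wfTRS : PrimrecPred fun x : List (ℕ × ℕ) × List (Term × Term) =>
    WFTRS x.1 x.2 := by
  refine PrimrecPred.of_eq (PrimrecPred.and ?_ ?_) fun x => wfTRS_iff.symm
  · refine PrimrecPred.forallMem Primrec.fst (PrimrecPred.forallMem
      (Primrec.fst.comp Primrec.fst) (PrimrecPred.or (PrimrecPred.not ?_) ?_))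
    · exact Primrec.eq.comp (Primrec.fst.comp (Primrec.snd.comp Primrec.fst))
        (Primrec.fst.comp Primrec.snd)
    · exact Primrec.eq.comp (Primrec.snd.comp (Primrec.snd.comp Primrec.fst))
        (Primrec.snd.comp Primrec.snd)
  · have hs : Primrec fun y : (List (ℕ × ℕ) × List (Term × Term)) × (Term × Term) => y.1.1 :=
      Primrec.fst.comp Primrec.fst
    have h1 : Primrec fun y : (List (ℕ × ℕ) × List (Term × Term)) × (Term × Term) => y.2.1 :=
      Primrec.fst.comp Primrec.snd
    have h2 : Primrec fun y : (List (ℕ × ℕ) × List (Term × Term)) × (Term × Term) => y.2.2 :=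
      Primrec.snd.comp Primrec.snd
    exact PrimrecPred.forallMem Primrec.snd ((primrec_wfTerm hs h1).and
      ((primrec_wfTerm hs h2).and ((Primrec.eq.comp (primrec_asVar.comp h1) (Primrec.const none)).and
        (PrimrecPred.forallMem (primrec_vars.comp h2) (PrimrecPred.mem
          (primrec_vars.comp (h1.comp Primrec.fst)) Primrec.snd)))))

end primrec

/-! ### Recursive enumerability -/

theorem encodeTRS_eq (R : List (Term × Term)) : encodeTRS R = Encodable.encode R := by
  unfold encodeTRS
  induction R with
  | nil => rfl
  | cons p R ih =>
    rw [List.map_cons, Encodable.encode_list_cons, Encodable.encode_list_cons, ih]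
    rfl

/-- The set of codes of uniformly weakly confluent systems. -/
def wcrSet : Set ℕ := { n : ℕ | ∃ (sig : List (ℕ × ℕ)) (R : List (Term × Term)),
  WFTRS sig R ∧ n = Nat.pair (encodeSig sig) (encodeTRS R) ∧
  ∀ t : Term, WFTerm sig t → WCRon R t }

/-- A certificate that a number belongs to `wcrSet`: the signature, the rules, and certificates for
the critical pairs. -/
abbrev FullCert := (List (ℕ × ℕ) × List (Term × Term)) × List (ℕ × List Cert × List Cert)

/-- Correctness of a certificate. -/
def FullOK (n : ℕ) (c : FullCert) : Prop :=
  WFTRS c.1.1 c.1.2 ∧ n = Encodable.encode c.1 ∧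
    ∀ st ∈ cpStates c.1.2, ∃ d ∈ c.2, SolvedBy c.1.2 st d

theorem mem_wcrSet {n : ℕ} : n ∈ wcrSet ↔ ∃ c, FullOK n c := by
  have he : ∀ (sig : List (ℕ × ℕ)) (R : List (Term × Term)),
      Encodable.encode (sig, R) = Nat.pair (encodeSig sig) (encodeTRS R) := fun sig R => by
    rw [encodeTRS_eq]; rfl
  constructor
  · rintro ⟨sig, R, hR, hn, h⟩
    obtain ⟨cs, hcs⟩ := (wcr_iff_cert hR).1 h
    exact ⟨((sig, R), cs), hR, hn.trans (he sig R).symm, hcs⟩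
  · rintro ⟨⟨⟨sig, R⟩, cs⟩, hR, hn, h⟩
    exact ⟨sig, R, hR, hn.trans (he sig R), (wcr_iff_cert hR).2 ⟨cs, h⟩⟩

theorem primrec_fullOK : PrimrecRel FullOK := by
  have hR : Primrec fun x : ℕ × FullCert => x.2.1.2 :=
    Primrec.snd.comp (Primrec.fst.comp Primrec.snd)
  refine (primrec_wfTRS.comp (Primrec.fst.comp Primrec.snd)).and (PrimrecPred.and ?_ ?_)
  · exact Primrec.eq.comp Primrec.fst (Primrec.encode.comp (Primrec.fst.comp Primrec.snd))
  · exact PrimrecPred.forallMem (primrec_cpStates.comp hR) (PrimrecPred.existsMem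
      (Primrec.snd.comp (Primrec.snd.comp Primrec.fst)) (primrec_solvedBy
        (hR.comp (Primrec.fst.comp Primrec.fst)) (Primrec.snd.comp Primrec.fst) Primrec.snd))

/-- A number is in `wcrSet` iff the search for a certificate succeeds. -/
theorem sigma01_wcrSet : Sigma01 wcrSet := by
  classical
  have hp : PrimrecRel fun (n m : ℕ) => ∃ c ∈ (Encodable.decode (α := FullCert) m).toList,
      FullOK n c :=
    PrimrecPred.existsMem (Primrec.optionToList.comp (Primrec.decode.comp Primrec.snd))
      (primrec_fullOK.comp (Primrec.fst.comp Primrec.fst) Primrec.snd)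
  refine ⟨fun n => Nat.rfind fun m => Part.some (decide (∃ c ∈
    (Encodable.decode (α := FullCert) m).toList, FullOK n c)), ?_, fun n => ?_⟩
  · refine Partrec.nat_iff.1 (Partrec.rfind ?_)
    exact (Primrec₂.to_comp hp.decide).partrec₂
  · rw [mem_wcrSet]
    refine Iff.trans ?_ (Nat.rfind_dom (p := fun m => Part.some _)).symm
    simp only [Part.mem_some_iff, Part.some_dom, implies_true, and_true, true_eq_decide_iff,
      Option.mem_toList]
    constructor
    · rintro ⟨c, hc⟩
      exact ⟨Encodable.encode c, c, Encodable.encodek c, hc⟩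
    · rintro ⟨m, c, -, hc⟩
      exact ⟨c, hc⟩

/-! ### A term rewriting system simulating `Turing.ToPartrec` machines -/

namespace Sim

open Turing.ToPartrec StateTransition

/-! The symbols are `0 = A`, `1 = H`, `2 = N`, `3 = Ret`, `4 = nil`, `5 = cons`, `6 = zero`,
`7 = succ`; `8, …, 14` stand for the constructors of `Code` and `15, …, 19` for those of `Cont`. -/

/-- The configuration that is about to evaluate the code `c` on `v` with continuation `k`. -/
abbrev tN (c k v : Term) : Term := .app 2 [c, k, v]

/-- The configuration that passes the value `v` to the continuation `k`. -/
abbrev tRet (k v : Term) : Term := .app 3 [k, v]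

/-- The branching symbol `A`. -/
abbrev tA : Term := .app 0 []

/-- The halting symbol `H`. -/
abbrev tH : Term := .app 1 []

abbrev tNil : Term := .app 4 []
abbrev tCons (x v : Term) : Term := .app 5 [x, v]
abbrev tZ : Term := .app 6 []
abbrev tS (x : Term) : Term := .app 7 [x]

/-- The arities of the symbols. -/
def sig : List (ℕ × ℕ) :=
  [(0, 0), (1, 0), (2, 3), (3, 2), (4, 0), (5, 2), (6, 0), (7, 1), (8, 0), (9, 0), (10, 0),
    (11, 2), (12, 2), (13, 2), (14, 1), (15, 0), (16, 3), (17, 2), (18, 2), (19, 2)]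

/-- The rules for `N` and `Ret`, following `stepNormal` and `stepRet`. -/
def machine : List (Term × Term) :=
  [ (tN (.app 8 []) (.var 0) (.var 1), tRet (.var 0) (tCons tZ (.var 1))),
    (tN (.app 9 []) (.var 0) tNil, tRet (.var 0) (tCons (tS tZ) tNil)),
    (tN (.app 9 []) (.var 0) (tCons (.var 1) (.var 2)), tRet (.var 0) (tCons (tS (.var 1)) tNil)),
    (tN (.app 10 []) (.var 0) tNil, tRet (.var 0) tNil),
    (tN (.app 10 []) (.var 0) (tCons (.var 1) (.var 2)), tRet (.var 0) (.var 2)),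
    (tN (.app 11 [.var 0, .var 1]) (.var 2) (.var 3),
      tN (.var 0) (.app 16 [.var 1, .var 3, .var 2]) (.var 3)),
    (tN (.app 12 [.var 0, .var 1]) (.var 2) (.var 3),
      tN (.var 1) (.app 18 [.var 0, .var 2]) (.var 3)),
    (tN (.app 13 [.var 0, .var 1]) (.var 2) tNil, tN (.var 0) (.var 2) tNil),
    (tN (.app 13 [.var 0, .var 1]) (.var 2) (tCons tZ (.var 3)), tN (.var 0) (.var 2) (.var 3)),
    (tN (.app 13 [.var 0, .var 1]) (.var 2) (tCons (tS (.var 3)) (.var 4)),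
      tN (.var 1) (.var 2) (tCons (.var 3) (.var 4))),
    (tN (.app 14 [.var 0]) (.var 1) (.var 2), tN (.var 0) (.app 19 [.var 0, .var 1]) (.var 2)),
    (tRet (.app 15 []) (.var 0), tH),
    (tRet (.app 16 [.var 0, .var 1, .var 2]) (.var 3),
      tN (.var 0) (.app 17 [.var 3, .var 2]) (.var 1)),
    (tRet (.app 17 [tNil, .var 0]) (.var 1), tRet (.var 0) (tCons tZ (.var 1))),
    (tRet (.app 17 [tCons (.var 0) (.var 1), .var 2]) (.var 3),
      tRet (.var 2) (tCons (.var 0) (.var 3))),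
    (tRet (.app 18 [.var 0, .var 1]) (.var 2), tN (.var 0) (.var 1) (.var 2)),
    (tRet (.app 19 [.var 0, .var 1]) tNil, tRet (.var 1) tNil),
    (tRet (.app 19 [.var 0, .var 1]) (tCons tZ (.var 2)), tRet (.var 1) (.var 2)),
    (tRet (.app 19 [.var 0, .var 1]) (tCons (tS (.var 2)) (.var 3)),
      tN (.var 0) (.app 19 [.var 0, .var 1]) (.var 3)) ]

/-- The machine together with a peak `i ← A → H`. -/
def rules (i : Term) : List (Term × Term) := (tA, i) :: (tA, tH) :: machine

/-- The unique root reduct of a term under `machine`, if any. -/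
def next : Term → Option Term
  | .app 2 [.app 8 [], k, v] => some (tRet k (tCons tZ v))
  | .app 2 [.app 9 [], k, .app 4 []] => some (tRet k (tCons (tS tZ) tNil))
  | .app 2 [.app 9 [], k, .app 5 [x, _]] => some (tRet k (tCons (tS x) tNil))
  | .app 2 [.app 10 [], k, .app 4 []] => some (tRet k tNil)
  | .app 2 [.app 10 [], k, .app 5 [_, v]] => some (tRet k v)
  | .app 2 [.app 11 [f, g], k, v] => some (tN f (.app 16 [g, v, k]) v)
  | .app 2 [.app 12 [f, g], k, v] => some (tN g (.app 18 [f, k]) v)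
  | .app 2 [.app 13 [f, _], k, .app 4 []] => some (tN f k tNil)
  | .app 2 [.app 13 [f, _], k, .app 5 [.app 6 [], v]] => some (tN f k v)
  | .app 2 [.app 13 [_, g], k, .app 5 [.app 7 [x], v]] => some (tN g k (tCons x v))
  | .app 2 [.app 14 [f], k, v] => some (tN f (.app 19 [f, k]) v)
  | .app 3 [.app 15 [], _] => some tH
  | .app 3 [.app 16 [f, a, k], v] => some (tN f (.app 17 [v, k]) a)
  | .app 3 [.app 17 [.app 4 [], k], v] => some (tRet k (tCons tZ v))
  | .app 3 [.app 17 [.app 5 [x, _], k], v] => some (tRet k (tCons x v))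
  | .app 3 [.app 18 [f, k], v] => some (tN f k v)
  | .app 3 [.app 19 [_, k], .app 4 []] => some (tRet k tNil)
  | .app 3 [.app 19 [_, k], .app 5 [.app 6 [], v]] => some (tRet k v)
  | .app 3 [.app 19 [f, k], .app 5 [.app 7 [_], v]] => some (tN f (.app 19 [f, k]) v)
  | _ => none

theorem next_subst {p : Term × Term} (hp : p ∈ machine) (σ : ℕ → Term) :
    next (p.1.subst σ) = some (p.2.subst σ) := by
  simp only [machine, List.mem_cons, List.not_mem_nil, or_false] at hp
  rcases hp with rfl | rfl | rfl | rfl | rfl | rfl | rfl | rfl | rfl | rfl | rfl | rfl | rfl |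
    rfl | rfl | rfl | rfl | rfl | rfl <;> simp [next]

/-- Data terms: no symbol among `A`, `H`, `N`, `Ret` occurs. -/
inductive Inert : Term → Prop
  | var (n : ℕ) : Inert (.var n)
  | app {f : ℕ} {ts : List Term} : 4 ≤ f → (∀ t ∈ ts, Inert t) → Inert (.app f ts)

@[simp] theorem inert_var (n : ℕ) : Inert (.var n) := .var n

@[simp] theorem inert_app {f : ℕ} {ts : List Term} :
    Inert (.app f ts) ↔ 4 ≤ f ∧ ∀ t ∈ ts, Inert t :=
  ⟨fun | .app h h' => ⟨h, h'⟩, fun h => .app h.1 h.2⟩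

theorem lhs_machine {p : Term × Term} (hp : p ∈ machine) :
    ∃ f ts, p.1 = .app f ts ∧ (f = 2 ∨ f = 3) ∧ ∀ t ∈ ts, Inert t := by
  simp only [machine, List.mem_cons, List.not_mem_nil, or_false] at hp
  rcases hp with rfl | rfl | rfl | rfl | rfl | rfl | rfl | rfl | rfl | rfl | rfl | rfl | rfl |
    rfl | rfl | rfl | rfl | rfl | rfl <;> exact ⟨_, _, rfl, by simp, by simp⟩

/-- The arguments of every left-hand side are data terms, so proper overlaps cannot occur. -/
theorem lhs_rules {i : Term} {p : Term × Term} (hp : p ∈ rules i) :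
    ∃ f ts, p.1 = .app f ts ∧ (f < 4 ∧ f ≠ 1) ∧ ∀ t ∈ ts, Inert t := by
  simp only [rules, List.mem_cons] at hp
  rcases hp with rfl | rfl | hp
  · exact ⟨0, [], rfl, by simp, by simp⟩
  · exact ⟨0, [], rfl, by simp, by simp⟩
  · obtain ⟨f, ts, h, hf, hts⟩ := lhs_machine hp
    exact ⟨f, ts, h, by omega, hts⟩

theorem rootStep_head {i : Term} {f : ℕ} {ts : List Term} {t' : Term}
    (h : RootStep (rules i) (.app f ts) t') : f < 4 ∧ f ≠ 1 := by
  obtain ⟨l, r, σ, hp, hl, -⟩ := h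
  obtain ⟨g, us, rfl, hg, -⟩ := lhs_rules hp
  simp only [subst_app, Term.app.injEq] at hl
  omega

theorem Inert.normal {i t : Term} (ht : Inert t) : NormalForm (rules i) t := by
  induction ht with
  | var n =>
    intro u h
    generalize hs : Term.var n = s at h
    cases h with
    | rule l r σ hp =>
      obtain ⟨g, us, rfl, -, -⟩ := lhs_rules hp
      simp at hs
    | congr => simp at hs
  | app hf _ ih =>
    intro u h
    rcases rewrite_app h with h | ⟨as, t, bs, u, rfl, -, h⟩
    · have := rootStep_head h
      omega
    · exact ih t (by simp) u h

/-- Terms all of whose arguments are data terms are only rewritten at the root. -/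
theorem rootStep_of_inert {i : Term} {f : ℕ} {ts : List Term} {t' : Term}
    (hts : ∀ t ∈ ts, Inert t) (h : Rewrite (rules i) (.app f ts) t') :
    RootStep (rules i) (.app f ts) t' := by
  rcases rewrite_app h with h | ⟨as, t, bs, u, rfl, -, h⟩
  · exact h
  · exact ((hts t (by simp)).normal u h).elim

theorem normal_tH {i : Term} : NormalForm (rules i) tH := fun _ h =>
  (rootStep_head (rootStep_of_inert (by simp) h)).2 rfl

theorem next_eq_of_rewrite {i : Term} {f : ℕ} {ts : List Term} {t' : Term} (hf : f ≠ 0)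
    (hts : ∀ t ∈ ts, Inert t) (h : Rewrite (rules i) (.app f ts) t') :
    next (.app f ts) = some t' := by
  obtain ⟨l, r, σ, hp, hl, rfl⟩ := rootStep_of_inert hts h
  simp only [rules, List.mem_cons] at hp
  rcases hp with hp | hp | hp
  · obtain ⟨rfl, rfl⟩ := Prod.mk.inj hp
    simp only [subst_app, Term.app.injEq] at hl
    exact (hf hl.1).elim
  · obtain ⟨rfl, rfl⟩ := Prod.mk.inj hp
    simp only [subst_app, Term.app.injEq] at hl
    exact (hf hl.1).elim
  · rw [hl]
    exact next_subst hp σ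

/-! ### Weak confluence of the simulating system -/

theorem inert_overlap {r l u s : Term} (h : Overlap r l u s) (hl : Inert l) :
    ∃ f ts, u = .app f ts ∧ 4 ≤ f := by
  induction h with
  | root f ts => exact ⟨f, ts, rfl, (inert_app.1 hl).1⟩
  | arg f as bs _ ih => exact ih ((inert_app.1 hl).2 _ (by simp))

theorem Inert.ren {t : Term} (ht : Inert t) {σ : ℕ → Term} (hσ : ∀ n, Inert (σ n)) :
    Inert (t.subst σ) := by
  induction ht with
  | var n => simpa using hσ n
  | app hf _ ih => simpa using ⟨hf, ih⟩

/-- If `i` reduces to `H`, the only critical pair that is not trivial is joinable. -/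
theorem wcr_of_reduces {i : Term} (hi : ∀ σ, i.subst σ = i) (h : Reduces (rules i) i tH) (t : Term) :
    WCRon (rules i) t := by
  refine CPJoinable.wcr (fun p hp q hq u s ho θ hu => ?_) t
  obtain ⟨f, ts, hl, hf, hts⟩ := lhs_rules hp
  obtain ⟨g, us, hl', hg, -⟩ := lhs_rules hq
  have hroot : u = p.1.subst ren0 ∧ s = q.2.subst ren1 := by
    rw [hl, subst_app] at ho ⊢
    generalize hts' : List.map (Term.subst ren0) ts = ts' at ho
    cases ho with
    | root => simp
    | arg _ as bs h =>
      exfalso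
      obtain ⟨f', us', rfl, hf'⟩ := inert_overlap h (by
        obtain ⟨a, ha, rfl⟩ := List.mem_map.1 (hts'.symm ▸ List.mem_append_right as
          List.mem_cons_self)
        exact (hts a ha).ren fun n => by simp [ren0])
      rw [hl'] at hu
      simp only [subst_app, Term.app.injEq] at hu
      omega
  obtain ⟨rfl, rfl⟩ := hroot
  have hrefl : ∀ a b : Term, a = b → Joinable (rules i) a b := fun a b h => h ▸ Joinable.refl a
  have hm : ∀ {p q : Term × Term}, p ∈ machine → q.1 = tA → ∀ σ τ : ℕ → Term,
      p.1.subst σ ≠ q.1.subst τ := fun hp hq σ τ h => by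
    obtain ⟨f, ts, hl, hf, -⟩ := lhs_machine hp
    rw [hl, hq] at h
    simp only [subst_app, Term.app.injEq] at h
    omega
  have hj : Joinable (rules i) i tH := ⟨tH, h, .refl⟩
  rw [subst_subst, subst_subst] at hu
  rw [subst_subst, subst_subst]
  simp only [rules, List.mem_cons] at hp hq
  rcases hp with rfl | rfl | hp <;> rcases hq with rfl | rfl | hq
  · exact hrefl _ _ ((hi _).trans (hi _).symm)
  · rw [hi]; simpa using hj
  · exact (hm hq rfl _ _ hu.symm).elim
  · rw [hi]; simpa using hj.symm
  · exact hrefl _ _ (by simp)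
  · exact (hm hq rfl _ _ hu.symm).elim
  · exact (hm hp rfl _ _ hu).elim
  · exact (hm hp rfl _ _ hu).elim
  · refine hrefl _ _ (Option.some.inj ?_)
    rw [← next_subst hp, ← next_subst hq, hu]

/-- Weak confluence at `A` forces `i` to reduce to `H`. -/
theorem reduces_of_wcr {i : Term} (h : WCRon (rules i) tA) : Reduces (rules i) i tH := by
  have h1 : Rewrite (rules i) tA (i.subst .var) := by
    simpa using Rewrite.rule (R := rules i) tA i .var (by simp [rules])
  have h2 : Rewrite (rules i) tA tH := by
    simpa using Rewrite.rule (R := rules i) tA tH .var (by simp [rules])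
  obtain ⟨d, hd1, hd2⟩ := h _ _ h1 h2
  rw [subst_id] at hd1
  rcases Relation.ReflTransGen.cases_head hd2 with rfl | ⟨e, he, -⟩
  · exact hd1
  · exact (normal_tH e he).elim

/-! ### Correctness of the simulation -/

/-- Numerals. -/
def num : ℕ → Term
  | 0 => tZ
  | n + 1 => tS (num n)

/-- Lists of numbers. -/
def vec : List ℕ → Term
  | [] => tNil
  | x :: v => tCons (num x) (vec v)

/-- Codes as terms. -/
def code : Code → Term
  | .zero' => .app 8 []
  | .succ => .app 9 []
  | .tail => .app 10 []
  | .cons f g => .app 11 [code f, code g]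
  | .comp f g => .app 12 [code f, code g]
  | .case f g => .app 13 [code f, code g]
  | .fix f => .app 14 [code f]

/-- Continuations as terms. -/
def cont : Cont → Term
  | .halt => .app 15 []
  | .cons₁ f as k => .app 16 [code f, vec as, cont k]
  | .cons₂ ns k => .app 17 [vec ns, cont k]
  | .comp f k => .app 18 [code f, cont k]
  | .fix f k => .app 19 [code f, cont k]

theorem inert_num (n : ℕ) : Inert (num n) := by
  induction n <;> simp_all [num]

theorem inert_vec (v : List ℕ) : Inert (vec v) := by
  induction v <;> simp_all [vec, inert_num]

theorem inert_code (c : Code) : Inert (code c) := by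
  induction c <;> simp_all [code]

theorem inert_cont (k : Cont) : Inert (cont k) := by
  induction k <;> simp_all [cont, inert_vec, inert_code]

/-- `Emb t cfg`: the term `t` represents a stage of the computation of the configuration `cfg`.
The computation of `stepNormal c k v` takes several rewrite steps but no step of the machine. -/
inductive Emb : Term → Cfg → Prop
  | norm (c : Code) (k : Cont) (v : List ℕ) :
      Emb (tN (code c) (cont k) (vec v)) (stepNormal c k v)
  | ret (k : Cont) (v : List ℕ) : Emb (tRet (cont k) (vec v)) (.ret k v)
  | halt (v : List ℕ) : Emb tH (.halt v)

/-- A rewrite step either leaves the next configuration of the machine unchanged or moves on to it.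
The first case also covers the recursive calls of `stepRet`, which are separate rewrite steps. -/
theorem Emb.rewrite {i t t' : Term} {cfg : Cfg} (h : Emb t cfg) (ht : Rewrite (rules i) t t') :
    ∃ cfg', Emb t' cfg' ∧ (step cfg' = step cfg ∨ step cfg = some cfg') := by
  cases h with
  | norm c k v =>
    have hn := next_eq_of_rewrite (by simp)
      (by simp [inert_code, inert_cont, inert_vec]) ht
    refine ⟨_, ?_, Or.inl rfl⟩
    cases c with
    | zero' =>
      simp only [code, next, Option.some.injEq] at hn
      subst hn; exact .ret k (0 :: v)
    | succ =>
      cases v with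
      | nil =>
        simp only [code, vec, next, Option.some.injEq] at hn
        subst hn; exact .ret k [1]
      | cons x v =>
        simp only [code, vec, next, Option.some.injEq] at hn
        subst hn; exact .ret k [x + 1]
    | tail =>
      cases v with
      | nil =>
        simp only [code, vec, next, Option.some.injEq] at hn
        subst hn; exact .ret k []
      | cons x v =>
        simp only [code, vec, next, Option.some.injEq] at hn
        subst hn; exact .ret k v
    | cons f g =>
      simp only [code, next, Option.some.injEq] at hn
      subst hn; exact .norm f (.cons₁ g v k) v
    | comp f g =>
      simp only [code, next, Option.some.injEq] at hn
      subst hn; exact .norm g (.comp f k) v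
    | case f g =>
      rcases v with _ | ⟨_ | x, v⟩
      · simp only [code, vec, next, Option.some.injEq] at hn
        subst hn; exact .norm f k []
      · simp only [code, vec, num, next, Option.some.injEq] at hn
        subst hn; exact .norm f k v
      · simp only [code, vec, num, next, Option.some.injEq] at hn
        subst hn; exact .norm g k (x :: v)
    | fix f =>
      simp only [code, next, Option.some.injEq] at hn
      subst hn; exact .norm f (.fix f k) v
  | ret k v =>
    have hn := next_eq_of_rewrite (by simp) (by simp [inert_cont, inert_vec]) ht
    cases k with
    | halt =>
      simp only [cont, next, Option.some.injEq] at hn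
      subst hn; exact ⟨_, .halt v, Or.inr rfl⟩
    | cons₁ f as k =>
      simp only [cont, next, Option.some.injEq] at hn
      subst hn; exact ⟨_, .norm f (.cons₂ v k) as, Or.inr rfl⟩
    | cons₂ ns k =>
      cases ns with
      | nil =>
        simp only [cont, vec, next, Option.some.injEq] at hn
        subst hn; exact ⟨_, .ret k (0 :: v), Or.inl rfl⟩
      | cons x ns =>
        simp only [cont, vec, next, Option.some.injEq] at hn
        subst hn; exact ⟨_, .ret k (x :: v), Or.inl rfl⟩
    | comp f k =>
      simp only [cont, next, Option.some.injEq] at hn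
      subst hn; exact ⟨_, .norm f k v, Or.inr rfl⟩
    | fix f k =>
      rcases v with _ | ⟨_ | x, v⟩
      · simp only [cont, vec, next, Option.some.injEq] at hn
        subst hn; exact ⟨_, .ret k [], Or.inl rfl⟩
      · simp only [cont, vec, num, next, Option.some.injEq] at hn
        subst hn; exact ⟨_, .ret k v, Or.inl rfl⟩
      · simp only [cont, vec, num, next, Option.some.injEq] at hn
        subst hn; exact ⟨_, .norm f (.fix f k) v, Or.inr rfl⟩
  | halt v => exact (normal_tH _ ht).elim

/-- An instance of the `j`-th rule of `machine`, the variables being replaced by the terms `as`. -/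
theorem fire (i : Term) (as : List Term) (j : ℕ) (hj : j < machine.length) :
    Rewrite (rules i) (machine[j].1.subst (lsub as)) (machine[j].2.subst (lsub as)) :=
  .rule _ _ _ (List.mem_cons_of_mem _ (List.mem_cons_of_mem _ (List.getElem_mem hj)))

/-- The term representing a configuration. -/
def canon : Cfg → Term
  | .halt _ => tH
  | .ret k v => tRet (cont k) (vec v)

theorem reduces_stepNormal (i : Term) (c : Code) (k : Cont) (v : List ℕ) :
    Reduces (rules i) (tN (code c) (cont k) (vec v)) (canon (stepNormal c k v)) := by
  have key : ∀ (as : List Term) (j : ℕ) (hj : j < machine.length) {t u : Term},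
      t = machine[j].1.subst (lsub as) → Reduces (rules i) (machine[j].2.subst (lsub as)) u →
      Reduces (rules i) t u := fun as j hj t u ht h => .head (ht ▸ fire i as j hj) h
  induction c generalizing k v with
  | zero' =>
    exact key [cont k, vec v] 0 (by decide) (by simp [machine, lsub, code])
      (by simp [machine, lsub, canon, stepNormal, vec, num]; exact .refl)
  | succ =>
    cases v with
    | nil =>
      exact key [cont k] 1 (by decide) (by simp [machine, lsub, code, vec])
        (by simp [machine, lsub, canon, stepNormal, vec, num]; exact .refl)
    | cons x v =>
      exact key [cont k, num x, vec v] 2 (by decide) (by simp [machine, lsub, code, vec])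
        (by simp [machine, lsub, canon, stepNormal, vec, num]; exact .refl)
  | tail =>
    cases v with
    | nil =>
      exact key [cont k] 3 (by decide) (by simp [machine, lsub, code, vec])
        (by simp [machine, lsub, canon, stepNormal, vec]; exact .refl)
    | cons x v =>
      exact key [cont k, num x, vec v] 4 (by decide) (by simp [machine, lsub, code, vec])
        (by simp [machine, lsub, canon, stepNormal]; exact .refl)
  | cons f g ihf _ =>
    exact key [code f, code g, cont k, vec v] 5 (by decide)
      (by simp [machine, lsub, code])
      (by simpa [machine, lsub, cont, stepNormal] using ihf (.cons₁ g v k) v)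
  | comp f g _ ihg =>
    exact key [code f, code g, cont k, vec v] 6 (by decide)
      (by simp [machine, lsub, code])
      (by simpa [machine, lsub, cont, stepNormal] using ihg (.comp f k) v)
  | case f g ihf ihg =>
    rcases v with _ | ⟨_ | x, v⟩
    · exact key [code f, code g, cont k] 7 (by decide) (by simp [machine, lsub, code, vec])
        (by simpa [machine, lsub, stepNormal, vec] using ihf k [])
    · exact key [code f, code g, cont k, vec v] 8 (by decide)
        (by simp [machine, lsub, code, vec, num])
        (by simpa [machine, lsub, stepNormal] using ihf k v)
    · exact key [code f, code g, cont k, num x, vec v] 9 (by decide)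
        (by simp [machine, lsub, code, vec, num])
        (by simpa [machine, lsub, stepNormal, vec] using ihg k (x :: v))
  | fix f ih =>
    exact key [code f, cont k, vec v] 10 (by decide)
      (by simp [machine, lsub, code])
      (by simpa [machine, lsub, cont, stepNormal] using ih (.fix f k) v)

theorem reduces_stepRet (i : Term) (k : Cont) (v : List ℕ) :
    Reduces (rules i) (tRet (cont k) (vec v)) (canon (stepRet k v)) := by
  have key : ∀ (as : List Term) (j : ℕ) (hj : j < machine.length) {t u : Term},
      t = machine[j].1.subst (lsub as) → Reduces (rules i) (machine[j].2.subst (lsub as)) u →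
      Reduces (rules i) t u := fun as j hj t u ht h => .head (ht ▸ fire i as j hj) h
  induction k generalizing v with
  | halt =>
    exact key [vec v] 11 (by decide) (by simp [machine, lsub, cont])
      (by simp [machine, canon, stepRet]; exact .refl)
  | cons₁ f as k _ =>
    exact key [code f, vec as, cont k, vec v] 12 (by decide)
      (by simp [machine, lsub, cont])
      (by simpa [machine, lsub, cont, stepRet] using reduces_stepNormal i f (.cons₂ v k) as)
  | cons₂ ns k ih =>
    cases ns with
    | nil =>
      exact key [cont k, vec v] 13 (by decide) (by simp [machine, lsub, cont, vec])
        (by simpa [machine, lsub, stepRet, vec, num] using ih (0 :: v))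
    | cons x ns =>
      exact key [num x, vec ns, cont k, vec v] 14 (by decide)
        (by simp [machine, lsub, cont, vec])
        (by simpa [machine, lsub, stepRet, vec] using ih (x :: v))
  | comp f k _ =>
    exact key [code f, cont k, vec v] 15 (by decide) (by simp [machine, lsub, cont])
      (by simpa [machine, lsub, stepRet] using reduces_stepNormal i f k v)
  | fix f k ih =>
    rcases v with _ | ⟨_ | x, v⟩
    · exact key [code f, cont k] 16 (by decide) (by simp [machine, lsub, cont, vec])
        (by simpa [machine, lsub, stepRet, vec] using ih [])
    · exact key [code f, cont k, vec v] 17 (by decide) (by simp [machine, lsub, cont, vec, num])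
        (by simpa [machine, lsub, stepRet] using ih v)
    · exact key [code f, cont k, num x, vec v] 18 (by decide)
        (by simp [machine, lsub, cont, vec, num])
        (by simpa [machine, lsub, stepRet, cont] using reduces_stepNormal i f (.fix f k) v)

/-- Whether an evaluation terminates depends only on the first step. -/
theorem eval_dom_congr {σ : Type*} {f : σ → Option σ} {a b : σ} (h : f a = f b) :
    (eval f a).Dom → (eval f b).Dom := by
  simp only [Part.dom_iff_mem, mem_eval]
  rintro ⟨c, hc, hn⟩
  rcases Relation.ReflTransGen.cases_head hc with rfl | ⟨d, hd, hdc⟩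
  · exact ⟨b, .refl, h ▸ hn⟩
  · exact ⟨c, .head (show d ∈ f b from h ▸ hd) hdc, hn⟩

theorem dom_of_reduces {i t : Term} (h : Reduces (rules i) t tH) :
    ∀ cfg, Emb t cfg → (eval step cfg).Dom := by
  induction h using Relation.ReflTransGen.head_induction_on with
  | refl =>
    intro cfg h
    generalize ht : tH = t at h
    cases h with
    | norm => simp at ht
    | ret => simp at ht
    | halt v => exact Part.dom_iff_mem.2 ⟨_, mem_eval.2 ⟨.refl, rfl⟩⟩
  | head h _ ih =>
    intro cfg hE
    obtain ⟨cfg', hE', h | h⟩ := hE.rewrite h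
    · exact eval_dom_congr h (ih cfg' hE')
    · rw [reaches_eval (Relation.ReflTransGen.single h)]
      exact ih cfg' hE'

theorem reduces_of_reaches (i : Term) {a b : Cfg} (h : Reaches step a b) :
    Reduces (rules i) (canon a) (canon b) := by
  induction h with
  | refl => exact .refl
  | @tail b c _ hbc ih =>
    refine ih.trans ?_
    cases b with
    | halt v => cases hbc
    | ret k v =>
      cases hbc
      exact reduces_stepRet i k v

/-- The initial configuration for the evaluation of `c` at `[n]`. -/
def start (c : Code) (n : ℕ) : Term := tN (code c) (cont .halt) (vec [n])

theorem reduces_start_iff (i : Term) (c : Code) (n : ℕ) :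
    Reduces (rules i) (start c n) tH ↔ (c.eval [n]).Dom := by
  have he : (eval step (stepNormal c .halt [n])).Dom ↔ (c.eval [n]).Dom := by
    rw [stepNormal_eval]; rfl
  rw [← he]
  refine ⟨fun h => dom_of_reduces h _ (.norm c .halt [n]), fun h => ?_⟩
  obtain ⟨b, hb⟩ := Part.dom_iff_mem.1 h
  obtain ⟨hr, hn⟩ := mem_eval.1 hb
  cases b with
  | halt v => exact (reduces_stepNormal i c .halt [n]).trans (reduces_of_reaches i hr)
  | ret k v => cases hn

/-! ### Hardness -/

theorem subst_start (c : Code) (n : ℕ) (σ : ℕ → Term) : (start c n).subst σ = start c n := by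
  have hc : ∀ c : Code, (code c).subst σ = code c := fun c => by
    induction c <;> simp_all [code]
  have hn : (num n).subst σ = num n := by
    induction n <;> simp_all [num]
  simp [start, hc, cont, vec, hn]

theorem wfTerm_start (c : Code) (n : ℕ) : WFTerm sig (start c n) := by
  have hc : ∀ c : Code, WFTerm sig (code c) := fun c => by
    induction c <;> simp_all [code, wfTerm_app, sig]
  have hn : WFTerm sig (num n) := by
    induction n <;> simp_all [num, wfTerm_app, sig]
  have := hc c
  simp_all [start, cont, vec, wfTerm_app, sig]

theorem vars_start (c : Code) (n : ℕ) : (start c n).vars = [] := by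
  refine List.eq_nil_iff_forall_not_mem.2 fun x => ?_
  have hc : ∀ c : Code, x ∉ (code c).vars := fun c => by
    induction c <;> simp_all [code, mem_vars_app]
  have hn : x ∉ (num n).vars := by
    induction n <;> simp_all [num, mem_vars_app]
  have := hc c
  simp_all [start, cont, vec, mem_vars_app]

theorem wf_machine : ∀ p ∈ machine, WFTerm sig p.1 ∧ WFTerm sig p.2 ∧
    p.1.asVar = none ∧ ∀ n ∈ p.2.vars, n ∈ p.1.vars := by
  have hv : ∀ (s : List (ℕ × ℕ)) (n : ℕ), WFTerm s (.var n) := fun _ => .var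
  simp [machine, wfTerm_app, hv, mem_vars_app, sig, asVar]
  grind

theorem wf_rules (c : Code) (n : ℕ) : WFTRS sig (rules (start c n)) := by
  refine wfTRS_iff.2 ⟨by decide, fun p hp => ?_⟩
  simp only [rules, List.mem_cons] at hp
  rcases hp with rfl | rfl | hp
  · exact ⟨by simp [wfTerm_app, sig], wfTerm_start c n, by simp, by simp [vars_start]⟩
  · exact ⟨by simp [wfTerm_app, sig], by simp [wfTerm_app, sig], by simp, by simp [mem_vars_app]⟩
  · exact wf_machine p hp

/-- The codes of the signature and of the rules can be recovered from the number, so membership in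
`wcrSet` concerns this very system. -/
theorem wcr_rules_iff (c : Code) (n : ℕ) :
    Nat.pair (encodeSig sig) (encodeTRS (rules (start c n))) ∈ wcrSet ↔ (c.eval [n]).Dom := by
  rw [← reduces_start_iff (start c n)]
  constructor
  · rintro ⟨s, R, -, h, hw⟩
    obtain ⟨hs, hR⟩ := Nat.pair_eq_pair.1 h
    rw [encodeTRS_eq, encodeTRS_eq] at hR
    obtain rfl := Encodable.encode_injective hs
    obtain rfl := Encodable.encode_injective hR
    exact reduces_of_wcr (hw tA (by simp [wfTerm_app, sig]))
  · exact fun h => ⟨sig, _, wf_rules c n, rfl, fun t _ => wcr_of_reduces (subst_start c n) h t⟩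

theorem primrec_num : Primrec num := by
  have hS : Primrec fun t : Term => tS t :=
    primrec_app.comp (Primrec.const 7) (Primrec.list_cons.comp Primrec.id (Primrec.const []))
  refine (Primrec.nat_rec₁ tZ (f := fun _ t => tS t) (hS.comp Primrec.snd).to₂).of_eq fun n => ?_
  induction n with
  | zero => rfl
  | succ n ih => simp only [num, ← ih]

theorem primrec_start (c : Code) : Primrec (start c) := by
  have hv : Primrec fun n => vec [n] := primrec_app.comp (Primrec.const 5)
    (Primrec.list_cons.comp primrec_num (Primrec.const [tNil]))
  exact primrec_app.comp (Primrec.const 2) (Primrec.list_cons.comp (Primrec.const (code c))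
    (Primrec.list_cons.comp (Primrec.const (cont .halt))
      (Primrec.list_cons.comp hv (Primrec.const []))))

theorem primrec_reduction (c : Code) : Primrec fun n =>
    Nat.pair (encodeSig sig) (encodeTRS (rules (start c n))) := by
  simp only [encodeTRS_eq]
  exact Primrec₂.natPair.comp (Primrec.const _) (Primrec.encode.comp (Primrec.list_cons.comp
    ((Primrec.const tA).pair (primrec_start c)) (Primrec.const ((tA, tH) :: machine))))

/-- Every recursively enumerable set reduces to the halting of some code on `[n]`, and hence to
weak confluence of `rules (start c n)`. -/
theorem hardness (B : Set ℕ) (hB : Sigma01 B) : ManyOneRed B wcrSet := by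
  obtain ⟨f, hf, hfB⟩ := hB
  obtain ⟨c, hc⟩ := Code.exists_code (Nat.Partrec'.part_iff₁.2 (Partrec.nat_iff.2 hf))
  refine ⟨_, (primrec_reduction c).to_comp, fun n => ?_⟩
  rw [wcr_rules_iff, hfB]
  have := hc (n ::ᵥ List.Vector.nil)
  simp only [List.Vector.head_cons] at this
  rw [show c.eval [n] = pure <$> f n from this]
  rfl

end Sim

/-- Uniform weak confluence (on every term over the signature) of a finite
TRS is Σ⁰₁-complete. -/
theorem wcr_uniform_Sigma01Complete :
    Sigma01Complete { n : ℕ | ∃ (sig : List (ℕ × ℕ)) (R : List (Term × Term)),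
      WFTRS sig R ∧ n = Nat.pair (encodeSig sig) (encodeTRS R) ∧
      ∀ t : Term, WFTerm sig t → WCRon R t } :=
  ⟨sigma01_wcrSet, Sim.hardness⟩
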